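/- Let n ≥ 2 and let a ∈ (0,∞)ⁿ have pairwise distinct entries. Then, for every bounded measurable φ from (2n−2)×(2n−2) real antisymmetric matrices to ℝ satisfying φ(k' Y k'ᵀ) = φ(Y) for all k' ∈ O(2n−2): ∫_{O(2n)} φ((k · D(a) · kᵀ)_{[2n−2]}) d*k = ∫_{(0,∞)^{n−1}} φ(D(x)) · p(x) dx, where p(x) = [(2n−2)!/(n−1)!] · (Δ_{n−1}(x²)/Δ_n(a²)) · det M(x,a), and M(x,a) is the n×n matrix whose first row has all entries equal to 1 and whose (j+1,k)-entry, for j = 1,…,n−1 and k = 1,…,n, equals (a_k − x_j)·1{a_k ≥ x_j}. -/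

import Mathlib

open MeasureTheory Matrix
open scoped BigOperators

noncomputable section

instance matrixMeasurableSpace {l : Type*} [Fintype l] : MeasurableSpace (Matrix l l ℝ) :=
  inferInstanceAs (MeasurableSpace (l → l → ℝ))

/-- The orthogonal group `O(m)` as a subtype of `m × m` real matrices. -/
abbrev OG (m : ℕ) := Matrix.orthogonalGroup (Fin m) ℝ

/-- `t ^ w` for a real `t ≥ 0` and complex `w`, with the convention `0 ^ w = 0`. -/
def cpw (t : ℝ) (w : ℂ) : ℂ := if t = 0 then 0 else Complex.exp (w * Real.log t)

/-- The `2n × 2n` real antisymmetric matrix `D(a) = diag(a₁ J, …, aₙ J)`,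
`J = [[0,1],[-1,0]]`. -/
def Dmat {n : ℕ} (a : Fin n → ℝ) : Matrix (Fin (2 * n)) (Fin (2 * n)) ℝ :=
  Matrix.of fun i j =>
    if i.val / 2 = j.val / 2 then
      a ⟨i.val / 2, by have := i.isLt; omega⟩ *
        (if i.val % 2 = 0 ∧ j.val % 2 = 1 then 1
          else if i.val % 2 = 1 ∧ j.val % 2 = 0 then -1 else 0)
    else 0

/-- Vandermonde product `Δ_m(x) = ∏_{j<k} (x_k - x_j)`. -/
def vdm {m : ℕ} {R : Type*} [CommRing R] (x : Fin m → R) : R :=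
  ∏ p ∈ Finset.univ.filter (fun p : Fin m × Fin m => p.1 < p.2), (x p.2 - x p.1)

/-- `s_{n+1} := -n-1` convention: the `j`-th exponent `(s_j - s_{j+1})/2 - 1`. -/
def expo (n : ℕ) (s : Fin n → ℂ) (j : Fin n) : ℂ :=
  (s j - (if h : j.val + 1 < n then s ⟨j.val + 1, h⟩ else -(n : ℂ) - 1)) / 2 - 1

/-- The spherical-type group integral
`f_n(s,X) = ∫_{O(2n)} ∏_j det((kXkᵀ)_{[2j]})^{(s_j-s_{j+1})/2-1} d*k`. -/
def sphInt (n : ℕ) (μ : Measure (OG (2 * n))) (s : Fin n → ℂ)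
    (X : Matrix (Fin (2 * n)) (Fin (2 * n)) ℝ) : ℂ :=
  ∫ k : OG (2 * n), ∏ j : Fin n,
    cpw ((((k : Matrix (Fin (2 * n)) (Fin (2 * n)) ℝ) * X *
        (k : Matrix (Fin (2 * n)) (Fin (2 * n)) ℝ)ᵀ).submatrix
          (Fin.castLE (by have := j.isLt; omega : 2 * (j.val + 1) ≤ 2 * n))
          (Fin.castLE (by have := j.isLt; omega : 2 * (j.val + 1) ≤ 2 * n))).det)
      (expo n s j) ∂μ


/-- A bounded measurable `O(m)`-invariant test function on antisymmetric matrices. -/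
def IsInvTest (m : ℕ) (φ : Matrix (Fin m) (Fin m) ℝ → ℝ) : Prop :=
  Measurable φ ∧ (∃ C, ∀ X, |φ X| ≤ C) ∧
    ∀ X : Matrix (Fin m) (Fin m) ℝ, Xᵀ = -X →
      ∀ k ∈ Matrix.orthogonalGroup (Fin m) ℝ, φ (k * X * kᵀ) = φ X

/-- The matrix `M(x,a)`: first row all ones, `(j+1,k)` entry `(a_k - x_j)·1{a_k ≥ x_j}`. -/
def Mxa {n : ℕ} (x : Fin (n - 1) → ℝ) (a : Fin n → ℝ) (hn : 2 ≤ n) :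
    Matrix (Fin n) (Fin n) ℝ :=
  Matrix.of fun b c =>
    if hb : b.val = 0 then 1
    else
      if x ⟨b.val - 1, by have := b.isLt; omega⟩ ≤ a c then
        a c - x ⟨b.val - 1, by have := b.isLt; omega⟩
      else 0

instance instBorelMat {l : Type*} [Fintype l] : BorelSpace (Matrix l l ℝ) :=
  inferInstanceAs (BorelSpace (l → l → ℝ))

instance instSCMat {l : Type*} [Fintype l] : SecondCountableTopology (Matrix l l ℝ) :=
  inferInstanceAs (SecondCountableTopology (l → l → ℝ))

instance instBorelOG (m : ℕ) : BorelSpace (OG m) :=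
  inferInstanceAs (BorelSpace {x : Matrix (Fin m) (Fin m) ℝ // x ∈ Matrix.orthogonalGroup (Fin m) ℝ})

instance instSCOG (m : ℕ) : SecondCountableTopology (OG m) :=
  TopologicalSpace.Subtype.secondCountableTopology (α := Matrix (Fin m) (Fin m) ℝ) _

lemma og_cont_entry (m : ℕ) (i j : Fin m) : Continuous fun k : OG m => k.1 i j :=
  (continuous_apply_apply (ρ := fun _ _ => ℝ) i j).comp continuous_subtype_val

instance instCompactOG (m : ℕ) : CompactSpace (OG m) := by
  refine isCompact_iff_compactSpace.mp (?_ : IsCompact ((OG m : Set (Matrix (Fin m) (Fin m) ℝ))))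
  have hcl : IsClosed ((OG m : Set (Matrix (Fin m) (Fin m) ℝ))) := by
    have : (OG m : Set (Matrix (Fin m) (Fin m) ℝ)) = {A | A * star A = 1} := by
      ext A; exact Matrix.mem_orthogonalGroup_iff _ _
    rw [this]
    exact isClosed_eq (by fun_prop) continuous_const
  have hK : IsCompact (Set.pi Set.univ (fun _ : Fin m => Set.pi Set.univ
      (fun _ : Fin m => Set.Icc (-1 : ℝ) 1))) :=
    isCompact_univ_pi fun _ => isCompact_univ_pi fun _ => isCompact_Icc
  refine hK.of_isClosed_subset hcl ?_
  intro A hA i _ j _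
  have := entry_norm_bound_of_unitary (𝕜 := ℝ) hA i j
  rw [Real.norm_eq_abs] at this
  exact abs_le.mp this

lemma og_mul_transpose {m : ℕ} (k : OG m) : (k : Matrix (Fin m) (Fin m) ℝ) * (k : Matrix _ _ ℝ)ᵀ = 1 := by
  have := (Matrix.mem_orthogonalGroup_iff _ _).mp k.2
  exact this

lemma og_transpose_mul {m : ℕ} (k : OG m) : (k : Matrix (Fin m) (Fin m) ℝ)ᵀ * (k : Matrix _ _ ℝ) = 1 := by
  have := (Matrix.mem_orthogonalGroup_iff' _ _).mp k.2
  exact this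

lemma og_coe_inv {m : ℕ} (k : OG m) : ((k⁻¹ : OG m) : Matrix (Fin m) (Fin m) ℝ) = (k : Matrix _ _ ℝ)ᵀ := rfl

lemma og_mem {m : ℕ} {A : Matrix (Fin m) (Fin m) ℝ} (h : A * Aᵀ = 1) :
    A ∈ Matrix.orthogonalGroup (Fin m) ℝ := (Matrix.mem_orthogonalGroup_iff _ _).mpr h

/-- gaussian weight -/
def gw {N : ℕ} (u : Fin N → ℝ) : ENNReal := ENNReal.ofReal (Real.exp (-(u ⬝ᵥ u)))

lemma gw_meas {N : ℕ} : Measurable (gw (N := N)) := by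
  unfold gw dotProduct
  fun_prop

lemma og_dot {m : ℕ} (k : OG m) (u v : Fin m → ℝ) : (u ᵥ* k.1) ⬝ᵥ (v ᵥ* k.1) = u ⬝ᵥ v := by
  rw [← Matrix.mulVec_transpose k.1 v, Matrix.dotProduct_mulVec, Matrix.vecMul_vecMul,
    og_mul_transpose, Matrix.vecMul_one]

lemma og_rot {m : ℕ} (k : OG m) (f : (Fin m → ℝ) → ENNReal) (hf : Measurable f) :
    ∫⁻ u, f (u ᵥ* k.1) = ∫⁻ u, f u := by
  have hdet : |(k.1)ᵀ.det| = 1 := by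
    have h := congrArg Matrix.det (og_mul_transpose k)
    rw [Matrix.det_mul, Matrix.det_transpose, Matrix.det_one] at h
    rw [Matrix.det_transpose]
    have : |k.1.det| * |k.1.det| = 1 := by rw [abs_mul_abs_self]; exact h
    nlinarith [abs_nonneg k.1.det]
  have hne : (k.1)ᵀ.det ≠ 0 := by intro h; rw [h] at hdet; simp at hdet
  have h := Real.map_matrix_volume_pi_eq_smul_volume_pi hne
  rw [abs_inv, hdet, inv_one, ENNReal.ofReal_one, one_smul] at h
  conv_rhs => rw [← h]
  rw [lintegral_map hf (by exact (LinearMap.continuous_of_finiteDimensional _).measurable)]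
  simp [Matrix.toLin'_apply, Matrix.mulVec_transpose]

lemma og_trans {N : ℕ} (u : Fin (N + 1) → ℝ) (hu : u ⬝ᵥ u = 1) :
    ∃ q : OG (N + 1), q.1 (Fin.last N) = u := by
  have hon : Orthonormal ℝ (fun _ : ({Fin.last N} : Set (Fin (N + 1))) => WithLp.toLp 2 u) := by
    constructor
    · intro i
      rw [EuclideanSpace.norm_eq, Real.sqrt_eq_one, ← hu]
      simp [dotProduct, sq]
    · intro i j hij
      exact absurd (Subsingleton.elim i j) hij
  obtain ⟨b, hb⟩ := Orthonormal.exists_orthonormalBasis_extension_of_card_eq (𝕜 := ℝ)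
    (E := EuclideanSpace ℝ (Fin (N + 1))) (ι := Fin (N + 1)) (by simp)
    (v := fun _ => WithLp.toLp 2 u) (s := {Fin.last N}) hon
  refine ⟨⟨Matrix.of fun i j => (b i) j, og_mem ?_⟩, ?_⟩
  · ext i j
    have := (orthonormal_iff_ite.mp b.orthonormal) i j
    rw [Matrix.mul_apply, Matrix.one_apply, ← this]
    simp [PiLp.inner_apply, mul_comm]
  · ext j
    have := hb (Fin.last N) rfl
    simp [this]

lemma row_law {N : ℕ} (ν : Measure (OG (N + 1))) [ν.IsMulLeftInvariant] [IsProbabilityMeasure ν]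
    (F : (Fin (N + 1) → ℝ) → ENNReal) (hF : Measurable F)
    (hh : ∀ c : ℝ, 0 < c → ∀ u, F (c • u) = F u) :
    (∫⁻ k, F (k.1 (Fin.last N)) ∂ν) * ∫⁻ u, gw (N := N + 1) u = ∫⁻ u, F u * gw u := by
  have hmeas : Measurable fun p : OG (N + 1) × (Fin (N + 1) → ℝ) => p.2 ᵥ* p.1.1 := by
    have : Continuous fun p : OG (N + 1) × (Fin (N + 1) → ℝ) => p.2 ᵥ* p.1.1 := by
      refine continuous_pi fun i => ?_
      simp only [Matrix.vecMul, dotProduct]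
      refine continuous_finsetSum _ fun j _ => Continuous.mul ?_ ?_
      · exact (continuous_apply j).comp continuous_snd
      · exact (og_cont_entry _ j i).comp continuous_fst
    exact this.measurable
  have h1 : ∀ k : OG (N + 1), ∫⁻ u, F (u ᵥ* k.1) * gw u = ∫⁻ u, F u * gw u := by
    intro k
    rw [← og_rot k (fun u => F u * gw u) (hF.mul gw_meas)]
    refine lintegral_congr fun u => ?_
    simp only [gw, og_dot, Pi.mul_apply]
  have h2 : ∫⁻ u, F u * gw u = ∫⁻ k : OG (N + 1), (∫⁻ u, F (u ᵥ* k.1) * gw u) ∂ν := by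
    simp [h1]
  rw [h2, lintegral_lintegral_swap]
  swap
  · exact ((hF.comp hmeas).mul (gw_meas.comp measurable_snd)).aemeasurable
  rw [← lintegral_const_mul _ gw_meas]
  refine lintegral_congr_ae ?_
  have hae : ∀ᵐ u : Fin (N + 1) → ℝ, u ≠ 0 := by
    simp [ae_iff]
  filter_upwards [hae] with u hu
  have hm2 : Measurable fun k : OG (N + 1) => F (u ᵥ* k.1) :=
    (hF.comp hmeas).comp (measurable_id.prodMk measurable_const)
  rw [lintegral_mul_const _ hm2]
  congr 1
  have hpos : 0 < u ⬝ᵥ u := by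
    have := (dotProduct_self_eq_zero (v := u)).not.mpr hu
    have h0 : 0 ≤ u ⬝ᵥ u := Finset.sum_nonneg fun i _ => mul_self_nonneg _
    exact lt_of_le_of_ne h0 (Ne.symm this)
  set c := Real.sqrt (u ⬝ᵥ u) with hc
  have hcpos : 0 < c := Real.sqrt_pos.mpr hpos
  obtain ⟨q, hq⟩ := og_trans (c⁻¹ • u) (by
    rw [smul_dotProduct, dotProduct_smul, smul_eq_mul, smul_eq_mul]
    have : u ⬝ᵥ u = c * c := (Real.mul_self_sqrt hpos.le).symm
    rw [this]; field_simp)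
  have h3 : ∀ k : OG (N + 1), F (u ᵥ* k.1) = F ((q * k).1 (Fin.last N)) := by
    intro k
    have : (q * k).1 (Fin.last N) = c⁻¹ • (u ᵥ* k.1) := by
      rw [← Matrix.smul_vecMul, ← hq]
      rfl
    rw [this, hh _ (inv_pos.mpr hcpos)]
  simp_rw [h3]
  rw [lintegral_mul_left_eq_self (fun k : OG (N+1) => F (k.1 (Fin.last N))) q]

/-- block antisymmetric matrix of any size -/
def Dgen (N : ℕ) (y : ℕ → ℝ) : Matrix (Fin N) (Fin N) ℝ :=
  Matrix.of fun i j =>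
    if i.val / 2 = j.val / 2 then
      y (i.val / 2) *
        (if i.val % 2 = 0 ∧ j.val % 2 = 1 then 1
          else if i.val % 2 = 1 ∧ j.val % 2 = 0 then -1 else 0)
    else 0

lemma Dgen_transpose (N : ℕ) (y : ℕ → ℝ) : (Dgen N y)ᵀ = - Dgen N y := by
  ext i j
  simp only [Dgen, Matrix.transpose_apply, Matrix.of_apply, Matrix.neg_apply]
  by_cases h : i.val / 2 = j.val / 2
  · rw [if_pos h, if_pos h.symm, h]
    have h1 := Nat.mod_two_eq_zero_or_one i.val
    have h2 := Nat.mod_two_eq_zero_or_one j.val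
    rcases h1 with h1 | h1 <;> rcases h2 with h2 | h2 <;> simp [h1, h2]
  · rw [if_neg h, if_neg (Ne.symm h)]; simp

lemma Dgen_diag_comm (N : ℕ) (y c : ℕ → ℝ) (u : Fin N → ℝ) :
    Dgen N y *ᵥ (fun r => c (r.val / 2) * u r) = fun r => c (r.val / 2) * (Dgen N y *ᵥ u) r := by
  ext r
  simp only [Matrix.mulVec, dotProduct, Finset.mul_sum]
  refine Finset.sum_congr rfl fun s _ => ?_
  by_cases h : r.val / 2 = s.val / 2
  · rw [h]; ring
  · simp [Dgen, h]

lemma Dgen_sq (N : ℕ) (y : ℕ → ℝ) (hN : N % 2 = 1 → y (N / 2) = 0) (u : Fin N → ℝ) :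
    Dgen N y *ᵥ (Dgen N y *ᵥ u) = fun r => - (y (r.val / 2) ^ 2 * u r) := by
  have h1 : ∀ (v : Fin N → ℝ) (r s : Fin N), r.val / 2 = s.val / 2 → r.val % 2 = 0 → s.val % 2 = 1 →
      (Dgen N y *ᵥ v) r = y (r.val / 2) * v s := by
    intro v r s h hr hs
    simp only [Matrix.mulVec, dotProduct]
    rw [Finset.sum_eq_single s]
    · simp [Dgen, h, hr, hs]
    · intro t _ ht
      have : ¬ (r.val / 2 = t.val / 2 ∧ t.val % 2 = 1) := by
        rintro ⟨h3, h4⟩; apply ht; ext; omega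
      by_cases h5 : r.val / 2 = t.val / 2
      · have h6 : t.val % 2 = 0 := by omega
        simp [Dgen, hr, h6]
      · simp [Dgen, h5]
    · simp
  have h2 : ∀ (v : Fin N → ℝ) (r s : Fin N), r.val / 2 = s.val / 2 → r.val % 2 = 1 → s.val % 2 = 0 →
      (Dgen N y *ᵥ v) r = - (y (r.val / 2) * v s) := by
    intro v r s h hr hs
    simp only [Matrix.mulVec, dotProduct]
    rw [Finset.sum_eq_single s]
    · simp [Dgen, h, hr, hs]
    · intro t _ ht
      by_cases h5 : r.val / 2 = t.val / 2
      · have h6 : t.val % 2 = 1 := by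
          by_contra h7
          apply ht; ext; omega
        simp [Dgen, hr, h6]
      · simp [Dgen, h5]
    · simp
  ext r
  rcases Nat.mod_two_eq_zero_or_one r.val with hr | hr
  · by_cases hlt : r.val + 1 < N
    · rw [h1 _ r ⟨r.val + 1, hlt⟩ (by simp; omega) hr (by simp; omega),
        h2 _ ⟨r.val + 1, hlt⟩ r (by simp; omega) (by simp; omega) hr]
      have : (r.val + 1) / 2 = r.val / 2 := by omega
      simp only [this]; ring
    · have hr2 : r.val = N - 1 := by omega
      have hN2 : N % 2 = 1 := by omega
      have h0 : y (r.val / 2) = 0 := by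
        have : r.val / 2 = N / 2 := by omega
        rw [this, hN hN2]
      simp only [Matrix.mulVec, dotProduct, h0]
      simp [Dgen, h0]
  · have hlt : r.val - 1 < N := by omega
    rw [h2 _ r ⟨r.val - 1, hlt⟩ (by simp; omega) hr (by simp; omega),
        h1 _ ⟨r.val - 1, hlt⟩ r (by simp; omega) (by simp; omega) hr]
    have : (r.val - 1) / 2 = r.val / 2 := by omega
    simp only [this]; ring

lemma antisym_dot {M : ℕ} {D : Matrix (Fin M) (Fin M) ℝ} (hD : Dᵀ = -D) (x z : Fin M → ℝ) :
    (D *ᵥ x) ⬝ᵥ z = - (x ⬝ᵥ (D *ᵥ z)) := by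
  rw [Matrix.dotProduct_mulVec, ← Matrix.mulVec_transpose, hD, Matrix.neg_mulVec, neg_dotProduct,
    neg_neg]

lemma frame_dots {M : ℕ} {D : Matrix (Fin M) (Fin M) ℝ} (hD : Dᵀ = -D) (u : Fin M → ℝ)
    (p q p' q' : Fin M → ℝ) (y y' : ℝ) (hq : D *ᵥ q = y • p) (hp : D *ᵥ p = u - y • q)
    (hq' : D *ᵥ q' = y' • p') (hp' : D *ᵥ p' = u - y' • q')
    (up : u ⬝ᵥ p = 0) (uq : u ⬝ᵥ q = 0) (up' : u ⬝ᵥ p' = 0) (uq' : u ⬝ᵥ q' = 0)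
    (hy : y ^ 2 ≠ y' ^ 2) : p ⬝ᵥ p' = 0 ∧ q ⬝ᵥ q' = 0 ∧ p ⬝ᵥ q' = 0 ∧ q ⬝ᵥ p' = 0 := by
  have pu := (dotProduct_comm p u).trans up
  have qu := (dotProduct_comm q u).trans uq
  have e1 := antisym_dot hD q p'
  have e2 := antisym_dot hD q' p
  have e3 := antisym_dot hD q q'
  have e4 := antisym_dot hD p p'
  rw [hq, hp'] at e1
  rw [hq', hp] at e2
  rw [hq, hq'] at e3
  rw [hp, hp'] at e4
  simp only [smul_dotProduct, dotProduct_smul, sub_dotProduct, dotProduct_sub, smul_eq_mul,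
    up, uq, up', uq', pu, qu, dotProduct_comm q' u, dotProduct_comm p' p, dotProduct_comm q' q] at e1 e2 e3 e4
  have hne : y ^ 2 - y' ^ 2 ≠ 0 := sub_ne_zero.mpr hy
  refine ⟨?_, ?_, ?_, ?_⟩ <;> apply (mul_eq_zero.mp ?_).resolve_left hne
  · linear_combination y * e1 - y' * e2
  · linear_combination y' * e1 - y * e2
  · linear_combination y * e3 + y' * e4
  · linear_combination -y' * e3 - y * e4

lemma frame_self {M : ℕ} {D : Matrix (Fin M) (Fin M) ℝ} (hD : Dᵀ = -D) (u : Fin M → ℝ)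
    (p q : Fin M → ℝ) (y : ℝ) (hq : D *ᵥ q = y • p) (hp : D *ᵥ p = u - y • q)
    (up : u ⬝ᵥ p = 0) (uq : u ⬝ᵥ q = 0) (hy : y ≠ 0) : q ⬝ᵥ q = p ⬝ᵥ p ∧ p ⬝ᵥ q = 0 := by
  have qu := (dotProduct_comm q u).trans uq
  have e1 := antisym_dot hD q p
  have e3 := antisym_dot hD q q
  rw [hq, hp] at e1
  rw [hq] at e3
  simp only [smul_dotProduct, dotProduct_smul, sub_dotProduct, dotProduct_sub, smul_eq_mul,
    up, uq, qu, dotProduct_comm q p] at e1 e3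
  constructor
  · apply mul_left_cancel₀ hy; linarith
  · apply (mul_eq_zero.mp (?_ : y * _ = 0)).resolve_left hy; linarith

lemma exists_frame (N : ℕ) (a y : ℕ → ℝ) (u : Fin (N + 1) → ℝ) (hu : u ⬝ᵥ u = 1)
    (ha : (N + 1) % 2 = 1 → a ((N + 1) / 2) = 0)
    (hya : ∀ i, 2 * i < N → ∀ r : Fin (N + 1), y i ^ 2 ≠ a (r.val / 2) ^ 2)
    (hyy : ∀ i j, 2 * i < N → 2 * j < N → i ≠ j → y i ^ 2 ≠ y j ^ 2)
    (hy0 : ∀ i, 2 * i + 1 < N → y i ≠ 0)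
    (hsec : ∀ i, 2 * i < N → y i * ∑ r : Fin (N + 1), u r ^ 2 / (y i ^ 2 - a (r.val / 2) ^ 2) = 0) :
    ∃ Q : OG (N + 1), Q.1 (Fin.last N) = u ∧
      (Q.1 * Dgen (N + 1) a * Q.1ᵀ).submatrix Fin.castSucc Fin.castSucc = Dgen N y := by
  set D := Dgen (N + 1) a with hDdef
  have hD : Dᵀ = -D := Dgen_transpose _ _
  set p : ℕ → Fin (N + 1) → ℝ := fun i r => (1 / (y i ^ 2 - a (r.val / 2) ^ 2)) * (D *ᵥ u) r with hpdef
  set q : ℕ → Fin (N + 1) → ℝ := fun i r => (1 / (y i ^ 2 - a (r.val / 2) ^ 2)) * (y i • u) r with hqdef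
  have hq : ∀ i, D *ᵥ q i = y i • p i := by
    intro i
    have := Dgen_diag_comm (N + 1) a (fun k => 1 / (y i ^ 2 - a k ^ 2)) (y i • u)
    simp only [hqdef]
    rw [hDdef, this, Matrix.mulVec_smul]
    ext r
    simp only [hpdef, Pi.smul_apply, smul_eq_mul]
    ring
  have hp : ∀ i, 2 * i < N → D *ᵥ p i = u - y i • q i := by
    intro i hi
    have := Dgen_diag_comm (N + 1) a (fun k => 1 / (y i ^ 2 - a k ^ 2)) (D *ᵥ u)
    simp only [hpdef]
    rw [hDdef, this, hDdef, Dgen_sq _ _ ha]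
    ext r
    simp only [hqdef, Pi.smul_apply, smul_eq_mul, Pi.sub_apply]
    have h := sub_ne_zero.mpr (hya i hi r)
    field_simp
    ring
  have up : ∀ i, u ⬝ᵥ p i = 0 := by
    intro i
    have e := antisym_dot hD u (fun r => (1 / (y i ^ 2 - a (r.val / 2) ^ 2)) * u r)
    have h1 := Dgen_diag_comm (N + 1) a (fun k => 1 / (y i ^ 2 - a k ^ 2)) u
    rw [← hDdef] at h1
    have h2 : (D *ᵥ u) ⬝ᵥ (fun r => (1 / (y i ^ 2 - a (r.val / 2) ^ 2)) * u r) = u ⬝ᵥ p i := by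
      simp only [dotProduct, hpdef]
      exact Finset.sum_congr rfl fun r _ => by ring
    rw [h1, h2] at e
    have : u ⬝ᵥ p i = - (u ⬝ᵥ p i) := e
    linarith
  have uq : ∀ i, 2 * i < N → u ⬝ᵥ q i = 0 := by
    intro i hi
    rw [← hsec i hi, Finset.mul_sum]
    simp only [dotProduct, hqdef, Pi.smul_apply, smul_eq_mul]
    exact Finset.sum_congr rfl fun r _ => by ring
  have ppos : ∀ i, 2 * i < N → 0 < p i ⬝ᵥ p i := by
    intro i hi
    have h0 : 0 ≤ p i ⬝ᵥ p i := Finset.sum_nonneg fun r _ => mul_self_nonneg _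
    refine lt_of_le_of_ne h0 fun h => ?_
    have hp0 : p i = 0 := dotProduct_self_eq_zero.mp h.symm
    have h1 := hp i hi
    rw [hp0, Matrix.mulVec_zero] at h1
    have h2 : u ⬝ᵥ (0 : Fin (N + 1) → ℝ) = u ⬝ᵥ (u - y i • q i) := by rw [h1]
    rw [dotProduct_zero, dotProduct_sub, dotProduct_smul, uq i hi, hu] at h2
    simp at h2
  set c : ℕ → ℝ := fun i => (Real.sqrt (p i ⬝ᵥ p i))⁻¹ with hc
  have hcc : ∀ i, 2 * i < N → c i * (c i * (p i ⬝ᵥ p i)) = 1 := by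
    intro i hi
    have h := ppos i hi
    have h1 : 0 < Real.sqrt (p i ⬝ᵥ p i) := Real.sqrt_pos.mpr h
    have h2 : p i ⬝ᵥ p i = Real.sqrt (p i ⬝ᵥ p i) * Real.sqrt (p i ⬝ᵥ p i) :=
      (Real.mul_self_sqrt h.le).symm
    simp only [hc]
    nth_rewrite 3 [h2]
    field_simp
  set R : Fin N → Fin (N + 1) → ℝ := fun r =>
    c (r.val / 2) • (if r.val % 2 = 0 then p (r.val / 2) else q (r.val / 2)) with hR
  have hlt : ∀ r : Fin N, 2 * (r.val / 2) < N := fun r => by omega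
  have hdots : ∀ i j, 2 * i < N → 2 * j < N → i ≠ j →
      p i ⬝ᵥ p j = 0 ∧ q i ⬝ᵥ q j = 0 ∧ p i ⬝ᵥ q j = 0 ∧ q i ⬝ᵥ p j = 0 := fun i j hi hj hij =>
    frame_dots hD u _ _ _ _ _ _ (hq i) (hp i hi) (hq j) (hp j hj) (up i) (uq i hi) (up j) (uq j hj)
      (hyy i j hi hj hij)
  have hself : ∀ i, 2 * i + 1 < N → q i ⬝ᵥ q i = p i ⬝ᵥ p i ∧ p i ⬝ᵥ q i = 0 := fun i hi =>
    frame_self hD u _ _ _ (hq i) (hp i (by omega)) (up i) (uq i (by omega)) (hy0 i hi)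
  have hRR : ∀ r s : Fin N, R r ⬝ᵥ R s = if r = s then 1 else 0 := by
    intro r s
    simp only [hR, smul_dotProduct, dotProduct_smul, smul_eq_mul]
    by_cases hrs : r.val / 2 = s.val / 2
    · rw [← hrs]
      rcases Nat.mod_two_eq_zero_or_one r.val with h1 | h1 <;>
        rcases Nat.mod_two_eq_zero_or_one s.val with h2 | h2
      · have : r = s := by ext; omega
        simp [h1, h2, this]
        exact hcc _ (hlt s)
      · have : r ≠ s := by rintro rfl; omega
        simp [h1, h2, this, (hself (r.val / 2) (by omega)).2]
      · have : r ≠ s := by rintro rfl; omega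
        simp [h1, h2, this, dotProduct_comm (q _) (p _), (hself (r.val / 2) (by omega)).2]
      · have : r = s := by ext; omega
        subst this
        simp [h1, (hself (r.val / 2) (by omega)).1]
        exact hcc _ (hlt r)
    · obtain ⟨e1, e2, e3, e4⟩ := hdots _ _ (hlt r) (hlt s) hrs
      have : r ≠ s := by rintro rfl; exact hrs rfl
      rw [if_neg this]
      split_ifs <;> simp [e1, e2, e3, e4]
  have huR : ∀ r : Fin N, u ⬝ᵥ R r = 0 := by
    intro r
    simp only [hR, dotProduct_smul]
    split_ifs
    · simp [up]
    · simp [uq _ (hlt r)]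
  have hDR : ∀ r s : Fin N, R r ⬝ᵥ (D *ᵥ R s) = Dgen N y r s := by
    intro r s
    have hRu : R r ⬝ᵥ u = 0 := (dotProduct_comm _ _).trans (huR r)
    rcases Nat.mod_two_eq_zero_or_one s.val with h2 | h2
    · have e : D *ᵥ R s = c (s.val / 2) • u - y (s.val / 2) • (c (s.val / 2) • q (s.val / 2)) := by
        simp only [hR, h2, if_true, Matrix.mulVec_smul, hp _ (hlt s), smul_sub]
        rw [smul_comm]
      rw [e, dotProduct_sub, dotProduct_smul, hRu, smul_zero, zero_sub]
      by_cases hs : s.val + 1 < N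
      · have e2 : c (s.val / 2) • q (s.val / 2) = R ⟨s.val + 1, hs⟩ := by
          have h3 : (s.val + 1) / 2 = s.val / 2 := by omega
          have h4 : (s.val + 1) % 2 = 1 := by omega
          simp [hR, h3, h4]
        rw [e2, dotProduct_smul, hRR]
        simp only [Dgen, Matrix.of_apply, h2]
        by_cases h5 : r = ⟨s.val + 1, hs⟩
        · have h6 : r.val = s.val + 1 := by rw [h5]
          have h7 : r.val / 2 = s.val / 2 := by omega
          have h8 : r.val % 2 = 1 := by omega
          simp [h5, h7, h8]
          rw [show (s.val + 1) / 2 = s.val / 2 by omega, show (s.val + 1) % 2 = 1 by omega]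
          simp
        · by_cases h7 : r.val / 2 = s.val / 2
          · have h8 : r.val % 2 = 0 := by
              by_contra h9; apply h5; ext; simp; omega
            simp [h5, h8]
          · simp [h5, h7]
      · have e2 : R r ⬝ᵥ y (s.val / 2) • c (s.val / 2) • q (s.val / 2) = 0 := by
          simp only [dotProduct_smul, smul_eq_mul]
          by_cases h7 : r.val / 2 = s.val / 2
          · have hrs : r = s := by ext; omega
            have h9 : y (s.val / 2) * (p (s.val / 2) ⬝ᵥ q (s.val / 2)) = 0 := by
              have e3 := antisym_dot hD (q (s.val / 2)) (q (s.val / 2))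
              rw [hq, smul_dotProduct, dotProduct_smul, dotProduct_comm (q _) (p _), smul_eq_mul] at e3
              linarith
            subst hrs
            simp only [hR, h2, if_true, smul_dotProduct, smul_eq_mul]
            linear_combination (c (r.val / 2) * c (r.val / 2)) * h9
          · obtain ⟨e1, e2, e3, e4⟩ := hdots _ _ (hlt r) (hlt s) h7
            simp only [hR, smul_dotProduct]
            split_ifs <;> simp [e2, e3]
        rw [e2]
        have : ¬ (r.val / 2 = s.val / 2 ∧ r.val % 2 = 1) := by rintro ⟨h3, h4⟩; omega
        by_cases h7 : r.val / 2 = s.val / 2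
        · have h8 : r.val % 2 = 0 := by omega
          simp [Dgen, h2, h8]
        · simp [Dgen, h7]
    · have hs : s.val - 1 < N := by omega
      have e : D *ᵥ R s = y (s.val / 2) • R ⟨s.val - 1, hs⟩ := by
        have h3 : (s.val - 1) / 2 = s.val / 2 := by omega
        have h4 : (s.val - 1) % 2 = 0 := by omega
        simp only [hR, h2, h3, h4, if_true, Matrix.mulVec_smul, one_ne_zero, if_false, hq]
        rw [smul_comm]
      rw [e, dotProduct_smul, hRR]
      simp only [Dgen, Matrix.of_apply, h2]
      by_cases h5 : r = ⟨s.val - 1, hs⟩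
      · have h6 : r.val = s.val - 1 := by rw [h5]
        have h7 : r.val / 2 = s.val / 2 := by omega
        have h8 : r.val % 2 = 0 := by omega
        rw [if_pos h5, if_pos h7, h7]
        simp [h8]
      · by_cases h7 : r.val / 2 = s.val / 2
        · have h8 : r.val % 2 = 1 := by
            by_contra h9; apply h5; ext; simp; omega
          simp [h5, h8]
        · simp [h5, h7]
  let Q : Matrix (Fin (N + 1)) (Fin (N + 1)) ℝ := Matrix.of (Fin.snoc (α := fun _ => Fin (N + 1) → ℝ) R u)
  have Q1 : ∀ r : Fin N, Q r.castSucc = R r := fun r => by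
    show Fin.snoc (α := fun _ => Fin (N + 1) → ℝ) R u r.castSucc = R r
    exact Fin.snoc_castSucc ..
  have Q2 : Q (Fin.last N) = u := by
    show Fin.snoc (α := fun _ => Fin (N + 1) → ℝ) R u (Fin.last N) = u
    exact Fin.snoc_last ..
  have QQ : Q * Qᵀ = 1 := by
    ext r s
    rw [Matrix.mul_apply_eq_vecMul, ]
    have : (Q r ᵥ* Qᵀ) s = Q r ⬝ᵥ Q s := rfl
    rw [this]
    refine Fin.lastCases ?_ (fun r => ?_) r <;> refine Fin.lastCases ?_ (fun s => ?_) s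
    · simp [Q2, hu]
    · rw [Q1, Q2, huR, Matrix.one_apply_ne (Fin.castSucc_ne_last s).symm]
    · rw [Q1, Q2, dotProduct_comm, huR, Matrix.one_apply_ne (Fin.castSucc_ne_last r)]
    · rw [Q1, Q1, hRR, Matrix.one_apply]
      simp
  refine ⟨⟨Q, og_mem QQ⟩, Q2, ?_⟩
  ext r s
  show (Q * D * Qᵀ) r.castSucc s.castSucc = _
  rw [← hDR r s, Matrix.mul_assoc, Matrix.mul_apply_eq_vecMul, ← Q1, ← Q1]
  show Q r.castSucc ⬝ᵥ (fun j => (D * Qᵀ) j s.castSucc) = _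
  rfl

/-- conjugation invariance on antisymmetric matrices -/
def CInv {m : ℕ} (ψ : Matrix (Fin m) (Fin m) ℝ → ENNReal) : Prop :=
  ∀ X : Matrix (Fin m) (Fin m) ℝ, Xᵀ = -X → ∀ k ∈ Matrix.orthogonalGroup (Fin m) ℝ,
    ψ (k * X * kᵀ) = ψ X

lemma same_row {N : ℕ} (ψ : Matrix (Fin N) (Fin N) ℝ → ENNReal) (hψ : CInv ψ)
    (D : Matrix (Fin (N + 1)) (Fin (N + 1)) ℝ) (hD : Dᵀ = -D) (k Q : OG (N + 1))
    (h : k.1 (Fin.last N) = Q.1 (Fin.last N)) :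
    ψ ((k.1 * D * k.1ᵀ).submatrix Fin.castSucc Fin.castSucc) =
      ψ ((Q.1 * D * Q.1ᵀ).submatrix Fin.castSucc Fin.castSucc) := by
  set G := k.1 * Q.1ᵀ with hG
  have hGG : G * Gᵀ = 1 := by
    rw [hG, Matrix.transpose_mul, Matrix.transpose_transpose, Matrix.mul_assoc, ← Matrix.mul_assoc Q.1ᵀ,
      og_transpose_mul, Matrix.one_mul, og_mul_transpose]
  have hkG : k.1 = G * Q.1 := by
    rw [hG, Matrix.mul_assoc, og_transpose_mul, Matrix.mul_one]
  have hl1 : ∀ s : Fin N, G (Fin.last N) s.castSucc = 0 := by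
    intro s
    have h1 : G (Fin.last N) s.castSucc = k.1 (Fin.last N) ⬝ᵥ Q.1 s.castSucc := rfl
    have h2 := congrFun (congrFun (og_mul_transpose Q) (Fin.last N)) s.castSucc
    rw [Matrix.one_apply_ne (Fin.castSucc_ne_last s).symm] at h2
    rw [h1, h]; exact h2
  have hl2 : ∀ s : Fin N, G s.castSucc (Fin.last N) = 0 := by
    intro s
    have h1 : G s.castSucc (Fin.last N) = k.1 s.castSucc ⬝ᵥ Q.1 (Fin.last N) := rfl
    have h2 := congrFun (congrFun (og_mul_transpose k) s.castSucc) (Fin.last N)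
    rw [Matrix.one_apply_ne (Fin.castSucc_ne_last s)] at h2
    rw [h1, ← h]; exact h2
  set G' := G.submatrix Fin.castSucc Fin.castSucc with hG'
  set X := Q.1 * D * Q.1ᵀ with hX
  have hG'm : G' ∈ Matrix.orthogonalGroup (Fin N) ℝ := by
    apply og_mem
    ext r s
    have h2 := congrFun (congrFun hGG r.castSucc) s.castSucc
    rw [Matrix.mul_apply, Fin.sum_univ_castSucc, hl2, zero_mul, add_zero] at h2
    rw [Matrix.mul_apply]
    refine h2.trans ?_
    simp [Matrix.one_apply]
  have hXk : k.1 * D * k.1ᵀ = G * X * Gᵀ := by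
    rw [hkG, hX, Matrix.transpose_mul]
    simp only [Matrix.mul_assoc]
  have hsub : (k.1 * D * k.1ᵀ).submatrix Fin.castSucc Fin.castSucc
      = G' * X.submatrix Fin.castSucc Fin.castSucc * G'ᵀ := by
    rw [hXk]
    ext r s
    simp only [Matrix.submatrix_apply, Matrix.mul_apply, Fin.sum_univ_castSucc, hl2,
      Matrix.transpose_apply, mul_zero, add_zero, zero_mul, hG']
  rw [hsub]
  apply hψ _ _ _ hG'm
  rw [Matrix.transpose_submatrix, hX, Matrix.transpose_mul, Matrix.transpose_mul, hD,
    Matrix.transpose_transpose, Matrix.neg_mul, Matrix.mul_neg, Matrix.mul_assoc]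
  rfl

def sg {m : ℕ} (B : Fin (m + 1) → ℝ) (j : Fin (m + 1)) : ℝ := ∏ i : Fin m, (B j - B (j.succAbove i))

lemma prod_erase_succAbove {m : ℕ} (f : Fin (m + 1) → ℝ) (j : Fin (m + 1)) :
    ∏ k ∈ Finset.univ.erase j, f k = ∏ i : Fin m, f (j.succAbove i) := by
  rw [← Finset.compl_singleton, ← Fin.image_succAbove_univ,
    Finset.prod_image (fun _ _ _ _ h => Fin.succAbove_right_injective h)]

lemma lagr {m : ℕ} {B : Fin (m + 1) → ℝ} (hB : Function.Injective B) {P : Polynomial ℝ}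
    (hP : P.natDegree ≤ m) : ∑ j, P.eval (B j) / sg B j = P.coeff m := by
  have := Lagrange.coeff_eq_sum (s := Finset.univ) (v := B) hB.injOn (P := P) (by
    refine lt_of_le_of_lt Polynomial.degree_le_natDegree ?_
    simp only [Finset.card_univ, Fintype.card_fin]
    exact_mod_cast Nat.lt_succ_of_le hP)
  simp only [Finset.card_univ, Fintype.card_fin, Nat.add_sub_cancel] at this
  rw [this]
  refine Finset.sum_congr rfl fun j _ => ?_
  rw [prod_erase_succAbove (fun k => B j - B k)]
  rfl

def vv {m : ℕ} (B : Fin (m + 1) → ℝ) (b : Fin m → ℝ) (j : Fin (m + 1)) : ℝ :=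
  (∏ i : Fin m, (B j - b i)) / sg B j

lemma vv_sum {m : ℕ} {B : Fin (m + 1) → ℝ} (hB : Function.Injective B) (b : Fin m → ℝ) :
    ∑ j, vv B b j = 1 := by
  have hm := Polynomial.monic_prod_X_sub_C (R := ℝ) b Finset.univ
  have hd : (∏ i : Fin m, (Polynomial.X - Polynomial.C (b i))).natDegree = m := by
    rw [Polynomial.natDegree_finsetProd_X_sub_C_eq_card]; simp
  have := lagr hB (P := ∏ i : Fin m, (Polynomial.X - Polynomial.C (b i))) hd.le
  have hc : (∏ i : Fin m, (Polynomial.X - Polynomial.C (b i))).coeff m = 1 := by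
    have h1 := hm.coeff_natDegree
    rwa [hd] at h1
  rw [hc] at this
  rw [← this]
  refine Finset.sum_congr rfl fun j _ => ?_
  rw [vv, Polynomial.eval_prod]
  simp

lemma vv_sec {m : ℕ} {B : Fin (m + 1) → ℝ} (hB : Function.Injective B) (b : Fin m → ℝ) (i : Fin m)
    (hb : ∀ j, b i ≠ B j) :
    ∑ j, vv B b j / (b i - B j) = 0 := by
  set P := ∏ l ∈ Finset.univ.erase i, (Polynomial.X - Polynomial.C (b l)) with hPd
  have hd : P.natDegree = m - 1 := by
    rw [hPd, Polynomial.natDegree_finsetProd_X_sub_C_eq_card]; simp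
  have hm0 : 0 < m := i.pos
  have := lagr hB (P := P) (by omega)
  rw [Polynomial.coeff_eq_zero_of_natDegree_lt (by omega)] at this
  rw [← neg_eq_zero, ← this, ← Finset.sum_neg_distrib]
  refine Finset.sum_congr rfl fun j _ => ?_
  rw [vv, hPd, Polynomial.eval_prod, ← Finset.mul_prod_erase Finset.univ _ (Finset.mem_univ i)]
  have h := sub_ne_zero.mpr (hb j)
  simp only [Polynomial.eval_sub, Polynomial.eval_X, Polynomial.eval_C]
  field_simp
  ring

def boxB {m : ℕ} (B : Fin (m + 1) → ℝ) : Set (Fin m → ℝ) :=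
  {b | ∀ i, B i.castSucc < b i ∧ b i < B i.succ}

lemma vv_pos {m : ℕ} {B : Fin (m + 1) → ℝ} (hB : StrictMono B) {b : Fin m → ℝ} (hb : b ∈ boxB B)
    (j : Fin (m + 1)) : 0 < vv B b j := by
  rw [vv, sg, ← Finset.prod_div_distrib]
  refine Finset.prod_pos fun i _ => ?_
  have hi := hb i
  by_cases h : i.castSucc < j
  · rw [Fin.succAbove_of_castSucc_lt _ _ h]
    have h1 : B i.succ ≤ B j := hB.monotone (Fin.castSucc_lt_iff_succ_le.mp h)
    have h2 := hB h
    apply div_pos <;> linarith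
  · have h' : j ≤ i.castSucc := not_lt.mp h
    rw [Fin.succAbove_of_le_castSucc _ _ h']
    have h1 : B j ≤ B i.castSucc := hB.monotone h'
    apply div_pos_of_neg_of_neg <;> linarith

lemma box_index {m : ℕ} {B : Fin (m + 1) → ℝ} (hB : StrictMono B) {b c : Fin m → ℝ}
    (hb : b ∈ boxB B) (hc : c ∈ boxB B) {i l : Fin m} (h : b i = c l) : i = l := by
  rcases lt_trichotomy i l with h1 | h1 | h1
  · have h2 : B i.succ ≤ B l.castSucc := hB.monotone (by
      rw [Fin.le_def]; simp; omega)
    linarith [(hb i).2, (hc l).1]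
  · exact h1
  · have h2 : B l.succ ≤ B i.castSucc := hB.monotone (by
      rw [Fin.le_def]; simp; omega)
    linarith [(hb i).1, (hc l).2]

lemma sg_ne {m : ℕ} {B : Fin (m + 1) → ℝ} (hB : Function.Injective B) (j : Fin (m + 1)) : sg B j ≠ 0 := by
  rw [sg, Finset.prod_ne_zero_iff]
  intro i _
  exact sub_ne_zero.mpr fun h => (Fin.succAbove_ne j i) (hB h).symm

lemma vv_inj {m : ℕ} {B : Fin (m + 1) → ℝ} (hB : StrictMono B) {b c : Fin m → ℝ}
    (hb : b ∈ boxB B) (hc : c ∈ boxB B) (h : ∀ j, vv B b j = vv B c j) : b = c := by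
  have hP : (∏ i : Fin m, (Polynomial.X - Polynomial.C (b i))) =
      ∏ i : Fin m, (Polynomial.X - Polynomial.C (c i)) := by
    have hd : ∀ b : Fin m → ℝ, (∏ i : Fin m, (Polynomial.X - Polynomial.C (b i))).degree
        < ((Finset.univ : Finset (Fin (m + 1))).card : WithBot ℕ) := by
      intro b
      refine lt_of_le_of_lt Polynomial.degree_le_natDegree ?_
      rw [Polynomial.natDegree_finsetProd_X_sub_C_eq_card]
      simp only [Finset.card_univ, Fintype.card_fin]
      exact_mod_cast Nat.lt_succ_self m
    refine Polynomial.eq_of_degrees_lt_of_eval_index_eq (v := B) Finset.univ hB.injective.injOn (hd b) (hd c) ?_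
    intro j _
    have := h j
    rw [vv, vv, div_left_inj' (sg_ne hB.injective j)] at this
    simpa [Polynomial.eval_prod] using this
  ext i
  have h1 := congrArg (Polynomial.eval (b i)) hP
  rw [Polynomial.eval_prod, Polynomial.eval_prod, Finset.prod_eq_zero (Finset.mem_univ i) (by simp)] at h1
  obtain ⟨l, _, hl⟩ := Finset.prod_eq_zero_iff.mp h1.symm
  have hl' : b i = c l := by simpa [sub_eq_zero] using hl
  have := box_index hB hb hc hl'
  rw [hl', this]

lemma sg_alt {m : ℕ} {B : Fin (m + 1) → ℝ} (hB : StrictMono B) (i : Fin m) :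
    sg B i.castSucc * sg B i.succ < 0 := by
  set b : Fin m → ℝ := fun i => (B i.castSucc + B i.succ) / 2
  have hb : b ∈ boxB B := by
    intro i
    have := hB (Fin.castSucc_lt_succ (i := i))
    simp only [b]
    constructor <;> linarith
  have h1 := vv_pos hB hb i.castSucc
  have h2 := vv_pos hB hb i.succ
  have h3 := mul_pos h1 h2
  rw [vv, vv, div_mul_div_comm] at h3
  have h4 : (∏ l : Fin m, (B i.castSucc - b l)) * (∏ l : Fin m, (B i.succ - b l)) < 0 := by
    rw [← Finset.prod_mul_distrib, ← Finset.mul_prod_erase Finset.univ _ (Finset.mem_univ i)]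
    apply mul_neg_of_neg_of_pos
    · have := hb i
      nlinarith
    · refine Finset.prod_pos fun l hl => ?_
      have hli : l ≠ i := Finset.ne_of_mem_erase hl
      have hbl := hb l
      rcases lt_or_gt_of_ne hli with h | h
      · have e1 : B l.succ ≤ B i.castSucc := hB.monotone (by rw [Fin.le_def]; simp; omega)
        have e2 := hB (Fin.castSucc_lt_succ (i := i))
        apply mul_pos <;> linarith
      · have e1 : B i.succ ≤ B l.castSucc := hB.monotone (by rw [Fin.le_def]; simp; omega)
        have e2 := hB (Fin.castSucc_lt_succ (i := i))
        apply mul_pos_of_neg_of_neg <;> linarith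
  by_contra h5
  push Not at h5
  have := div_nonpos_of_nonpos_of_nonneg h4.le h5
  linarith

lemma vv_surj {m : ℕ} {B : Fin (m + 1) → ℝ} (hB : StrictMono B) (W : Fin (m + 1) → ℝ)
    (hW : ∀ j, 0 < W j) : ∃ b ∈ boxB B, ∀ j, vv B b j = W j / ∑ k, W k := by
  set pj : Fin (m + 1) → Polynomial ℝ := fun j => ∏ i : Fin m, (Polynomial.X - Polynomial.C (B (j.succAbove i)))
  set f : Polynomial ℝ := ∑ j, Polynomial.C (W j) * pj j with hf
  have hev : ∀ j, f.eval (B j) = W j * sg B j := by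
    intro j
    rw [hf, Polynomial.eval_finset_sum, Finset.sum_eq_single j]
    · simp [pj, Polynomial.eval_prod, sg]
    · intro k _ hk
      rw [Polynomial.eval_mul]
      obtain ⟨i, hi⟩ := Fin.exists_succAbove_eq hk.symm
      have : (pj k).eval (B j) = 0 := by
        simp only [pj, Polynomial.eval_prod]
        exact Finset.prod_eq_zero (Finset.mem_univ i) (by simp [hi])
      rw [this, mul_zero]
    · simp
  have hroot : ∀ i : Fin m, ∃ t, B i.castSucc < t ∧ t < B i.succ ∧ f.eval t = 0 := by
    intro i
    have hlt := hB (Fin.castSucc_lt_succ (i := i))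
    have hs := sg_alt hB i
    have hprod : f.eval (B i.castSucc) * f.eval (B i.succ) < 0 := by
      rw [hev, hev]
      have := mul_pos (hW i.castSucc) (hW i.succ)
      nlinarith
    have hc : ContinuousOn (fun t => f.eval t) (Set.Icc (B i.castSucc) (B i.succ)) :=
      f.continuous.continuousOn
    rcases mul_neg_iff.mp hprod with ⟨h1, h2⟩ | ⟨h1, h2⟩
    · obtain ⟨t, ht, ht2⟩ := intermediate_value_Ioo' hlt.le hc ⟨h2, h1⟩
      exact ⟨t, ht.1, ht.2, ht2⟩
    · obtain ⟨t, ht, ht2⟩ := intermediate_value_Ioo hlt.le hc ⟨h1, h2⟩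
      exact ⟨t, ht.1, ht.2, ht2⟩
  choose b hb1 hb2 hb3 using hroot
  have hb : b ∈ boxB B := fun i => ⟨hb1 i, hb2 i⟩
  have hinj : Function.Injective b := fun i l h => box_index hB hb hb h
  refine ⟨b, hb, fun j => ?_⟩
  set P := ∏ i : Fin m, (Polynomial.X - Polynomial.C (b i)) with hP
  set S := ∑ k, W k with hS
  have hSpos : 0 < S := Finset.sum_pos (fun k _ => hW k) ⟨0, Finset.mem_univ 0⟩
  have hcoef : ∀ (c : Fin m → ℝ) (k : ℕ), m ≤ k →
      (∏ i : Fin m, (Polynomial.X - Polynomial.C (c i))).coeff k = if k = m then 1 else 0 := by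
    intro c k hk
    have hm := Polynomial.monic_prod_X_sub_C (R := ℝ) c Finset.univ
    have hd : (∏ i : Fin m, (Polynomial.X - Polynomial.C (c i))).natDegree = m := by
      rw [Polynomial.natDegree_finsetProd_X_sub_C_eq_card]; simp
    split_ifs with h
    · have h1 := hm.coeff_natDegree
      rw [hd] at h1
      rw [h, h1]
    · exact Polynomial.coeff_eq_zero_of_natDegree_lt (by omega)
  have hzero : f = Polynomial.C S * P := by
    rw [← sub_eq_zero]
    have hdeg : (f - Polynomial.C S * P).degree < m := by
      rw [Polynomial.degree_lt_iff_coeff_zero]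
      intro k hk
      rw [Polynomial.coeff_sub, Polynomial.coeff_C_mul, hf, Polynomial.finset_sum_coeff]
      simp only [Polynomial.coeff_C_mul, pj, hP]
      simp only [hcoef _ k hk]
      rw [← Finset.sum_mul, sub_self]
    refine Polynomial.eq_zero_of_degree_lt_of_eval_index_eq_zero (v := b) Finset.univ hinj.injOn
      (by simpa using hdeg) ?_
    intro i _
    rw [Polynomial.eval_sub, hb3, Polynomial.eval_mul, hP, Polynomial.eval_prod,
      Finset.prod_eq_zero (Finset.mem_univ i) (by simp)]
    simp
  have h1 := hev j
  rw [hzero, Polynomial.eval_mul, Polynomial.eval_C, hP, Polynomial.eval_prod] at h1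
  simp only [Polynomial.eval_sub, Polynomial.eval_X, Polynomial.eval_C] at h1
  rw [vv, div_eq_div_iff (sg_ne hB.injective j) hSpos.ne']
  linarith

lemma vdm_if {m : ℕ} (x : Fin m → ℝ) : vdm x = ∏ i, ∏ j, if i < j then x j - x i else 1 := by
  rw [vdm, Finset.prod_filter, ← Finset.univ_product_univ, Finset.prod_product]

lemma vdm_det {m : ℕ} (x : Fin m → ℝ) : vdm x = (Matrix.vandermonde x).det := by
  rw [vdm_if, Matrix.det_vandermonde]
  refine Finset.prod_congr rfl fun i _ => ?_
  rw [← Finset.prod_filter]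
  refine Finset.prod_congr ?_ fun _ _ => rfl
  ext j; simp

lemma vdm_succ {m : ℕ} (B : Fin (m + 1) → ℝ) :
    vdm B = (∏ j : Fin m, (B j.succ - B 0)) * vdm (fun j : Fin m => B j.succ) := by
  rw [vdm_if, vdm_if, Fin.prod_univ_succ, Fin.prod_univ_succ]
  simp only [lt_self_iff_false, if_false, one_mul, Fin.succ_pos, if_true]
  congr 1
  refine Finset.prod_congr rfl fun i _ => ?_
  rw [Fin.prod_univ_succ]
  simp [Fin.succ_lt_succ_iff]

lemma vdm_sq {m : ℕ} (b : Fin m → ℝ) :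
    |∏ i, ∏ l ∈ Finset.univ.erase i, (b i - b l)| = |vdm b| ^ 2 := by
  rw [vdm_if]
  have h1 : |∏ i, ∏ l ∈ Finset.univ.erase i, (b i - b l)| =
      ∏ i, ∏ l, if l ≠ i then |b i - b l| else 1 := by
    rw [Finset.abs_prod]
    refine Finset.prod_congr rfl fun i _ => ?_
    rw [Finset.abs_prod, ← Finset.prod_filter]
    refine Finset.prod_congr ?_ fun _ _ => rfl
    ext j; simp
  have h2 : |∏ i, ∏ j, if i < j then b j - b i else 1| = ∏ i, ∏ j, if i < j then |b j - b i| else 1 := by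
    rw [Finset.abs_prod]
    refine Finset.prod_congr rfl fun i _ => ?_
    rw [Finset.abs_prod]
    refine Finset.prod_congr rfl fun j _ => ?_
    split_ifs <;> simp
  rw [h1, h2, sq]
  nth_rewrite 2 [Finset.prod_comm]
  rw [← Finset.prod_mul_distrib]
  refine Finset.prod_congr rfl fun i _ => ?_
  rw [← Finset.prod_mul_distrib]
  refine Finset.prod_congr rfl fun j _ => ?_
  rcases lt_trichotomy i j with h | h | h
  · simp [h, h.ne', h.not_gt, abs_sub_comm]
  · simp [h]
  · simp [h, h.ne, h.not_gt]

lemma vdm_ne {m : ℕ} {b : Fin m → ℝ} (hb : Function.Injective b) : vdm b ≠ 0 := by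
  rw [vdm, Finset.prod_ne_zero_iff]
  intro p hp
  have : p.1 < p.2 := by simpa using hp
  exact sub_ne_zero.mpr fun h => this.ne' (hb h)

lemma vdm_pos {m : ℕ} {b : Fin m → ℝ} (hb : StrictMono b) : 0 < vdm b := by
  rw [vdm]
  refine Finset.prod_pos fun p hp => ?_
  have : p.1 < p.2 := by simpa using hp
  exact sub_pos.mpr (hb this)

lemma detZ {m : ℕ} (B' b : Fin m → ℝ) (hb : Function.Injective b) :
    |(Matrix.of fun j i : Fin m => ∏ l ∈ Finset.univ.erase i, (B' j - b l)).det| = |vdm B'| * |vdm b| := by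
  set P : Fin m → Polynomial ℝ := fun i => ∏ l ∈ Finset.univ.erase i, (Polynomial.X - Polynomial.C (b l)) with hP
  set C : Matrix (Fin m) (Fin m) ℝ := Matrix.of fun k i => (P i).coeff k
  have key : ∀ x : Fin m → ℝ, (Matrix.of fun j i : Fin m => ∏ l ∈ Finset.univ.erase i, (x j - b l)) =
      Matrix.vandermonde x * C := by
    intro x
    ext j i
    have hd : (P i).natDegree < m := by
      rw [hP, Polynomial.natDegree_finsetProd_X_sub_C_eq_card]
      have := i.pos
      simp; omega
    have h1 : (P i).eval (x j) = ∏ l ∈ Finset.univ.erase i, (x j - b l) := by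
      simp [hP, Polynomial.eval_prod]
    rw [Matrix.of_apply, ← h1, Polynomial.eval_eq_sum_range' hd, ← Fin.sum_univ_eq_sum_range
      (fun k => (P i).coeff k * x j ^ k), Matrix.mul_apply]
    refine Finset.sum_congr rfl fun k _ => ?_
    simp [Matrix.vandermonde_apply, C, mul_comm]
  have hdiag : (Matrix.of fun j i : Fin m => ∏ l ∈ Finset.univ.erase i, (b j - b l)) =
      Matrix.diagonal fun i => ∏ l ∈ Finset.univ.erase i, (b i - b l) := by
    ext j i
    by_cases h : j = i
    · subst h; simp
    · rw [Matrix.diagonal_apply_ne _ h, Matrix.of_apply]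
      exact Finset.prod_eq_zero (Finset.mem_erase.mpr ⟨h, Finset.mem_univ j⟩) (by simp)
  have e1 := congrArg (fun M => |Matrix.det M|) (key b)
  have e2 := congrArg (fun M => |Matrix.det M|) (key B')
  simp only [hdiag, Matrix.det_diagonal, vdm_sq, Matrix.det_mul, abs_mul, ← vdm_det] at e1 e2
  have h0 : |vdm b| ≠ 0 := abs_ne_zero.mpr (vdm_ne hb)
  have hC : |C.det| = |vdm b| := by
    rw [sq] at e1
    exact (mul_left_cancel₀ h0 e1).symm
  rw [e2, hC]

lemma sg_prod {m : ℕ} {B : Fin (m + 1) → ℝ} (hB : Function.Injective B) :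
    |∏ j : Fin m, sg B j.succ| * |sg B 0| = |vdm B| ^ 2 := by
  rw [← vdm_sq, ← abs_mul, mul_comm, ← Fin.prod_univ_succ (fun j => sg B j)]
  congr 1
  refine Finset.prod_congr rfl fun i _ => ?_
  rw [prod_erase_succAbove (fun l => B i - B l)]
  rfl

lemma sg_zero {m : ℕ} (B : Fin (m + 1) → ℝ) :
    |sg B 0| = |∏ j : Fin m, (B j.succ - B 0)| := by
  rw [sg, Finset.abs_prod, Finset.abs_prod]
  refine Finset.prod_congr rfl fun i _ => ?_
  rw [Fin.zero_succAbove, abs_sub_comm]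

def Kc {m : ℕ} (β : Fin (m + 1) → ℝ) (j : Fin m) : ℝ := sg (fun i => β i ^ 2) 0 / sg (fun i => β i ^ 2) j.succ

def Phi {m : ℕ} (β : Fin (m + 1) → ℝ) (y : Fin m → ℝ) (j : Fin m) : ℝ :=
  Kc β j * ∏ i : Fin m, ((β j.succ ^ 2 - y i ^ 2) / (β 0 ^ 2 - y i ^ 2))

lemma Phi_eq {m : ℕ} (β : Fin (m + 1) → ℝ) (y : Fin m → ℝ) (j : Fin m) :
    Phi β y j = vv (fun i => β i ^ 2) (fun i => y i ^ 2) j.succ / vv (fun i => β i ^ 2) (fun i => y i ^ 2) 0 := by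
  rw [Phi, Kc, vv, vv, Finset.prod_div_distrib]
  rw [div_div_div_eq, div_mul_div_comm]
  ring_nf

def Jm {m : ℕ} (β : Fin (m + 1) → ℝ) (y : Fin m → ℝ) : Matrix (Fin m) (Fin m) ℝ :=
  Matrix.of fun j i => Kc β j * ((∏ l ∈ Finset.univ.erase i, ((β j.succ ^ 2 - y l ^ 2) / (β 0 ^ 2 - y l ^ 2))) *
    (2 * y i * (β j.succ ^ 2 - β 0 ^ 2) / (β 0 ^ 2 - y i ^ 2) ^ 2))

lemma Phi_deriv {m : ℕ} (β : Fin (m + 1) → ℝ) (y : Fin m → ℝ) (h : ∀ i, β 0 ^ 2 - y i ^ 2 ≠ 0) :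
    HasFDerivAt (Phi β) (LinearMap.toContinuousLinearMap (Matrix.toLin' (Jm β y))) y := by
  rw [hasFDerivAt_pi']
  intro j
  have h1 : ∀ i ∈ (Finset.univ : Finset (Fin m)), HasFDerivAt
      (fun y : Fin m → ℝ => (β j.succ ^ 2 - y i ^ 2) / (β 0 ^ 2 - y i ^ 2))
      ((2 * y i * (β j.succ ^ 2 - β 0 ^ 2) / (β 0 ^ 2 - y i ^ 2) ^ 2) •
        (ContinuousLinearMap.proj i : (Fin m → ℝ) →L[ℝ] ℝ)) y := by
    intro i _
    have hd : HasDerivAt (fun t : ℝ => (β j.succ ^ 2 - t ^ 2) / (β 0 ^ 2 - t ^ 2))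
        (2 * y i * (β j.succ ^ 2 - β 0 ^ 2) / (β 0 ^ 2 - y i ^ 2) ^ 2) (y i) := by
      have a1 : HasDerivAt (fun t : ℝ => β j.succ ^ 2 - t ^ 2) (-(2 * y i)) (y i) := by
        simpa using (hasDerivAt_pow 2 (y i)).const_sub (β j.succ ^ 2)
      have a2 : HasDerivAt (fun t : ℝ => β 0 ^ 2 - t ^ 2) (-(2 * y i)) (y i) := by
        simpa using (hasDerivAt_pow 2 (y i)).const_sub (β 0 ^ 2)
      have a3 := a1.div a2 (h i)
      refine HasDerivAt.congr_deriv a3 ?_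
      ring
    have h3 : HasFDerivAt (fun f : Fin m → ℝ => f i) (ContinuousLinearMap.proj i : (Fin m → ℝ) →L[ℝ] ℝ) y :=
      hasFDerivAt_apply i y
    exact HasDerivAt.comp_hasFDerivAt (f := fun f : Fin m → ℝ => f i) y hd h3
  have h2 := (HasFDerivAt.finsetProd h1).const_mul (Kc β j)
  refine h2.congr_fderiv ?_
  ext v
  simp [Jm, Matrix.mulVec, dotProduct, Finset.mul_sum, ContinuousLinearMap.sum_apply]
  refine Finset.sum_congr rfl fun i _ => ?_
  ring

lemma Jm_det {m : ℕ} {β : Fin (m + 1) → ℝ} {y : Fin m → ℝ} (hβ : Function.Injective fun i => β i ^ 2)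
    (hy : Function.Injective fun i => y i ^ 2) (h : ∀ i, β 0 ^ 2 - y i ^ 2 ≠ 0) :
    |(Jm β y).det| = (|vv (fun i => β i ^ 2) (fun i => y i ^ 2) 0| ^ (m + 1))⁻¹ *
      (|vdm fun i => y i ^ 2| / |vdm fun i => β i ^ 2|) * |∏ i, (2 * y i)| := by
  set P := ∏ l, (β 0 ^ 2 - y l ^ 2) with hP
  have hP0 : P ≠ 0 := Finset.prod_ne_zero_iff.mpr fun i _ => h i
  have e : Jm β y = Matrix.diagonal (fun j : Fin m => Kc β j * (β j.succ ^ 2 - β 0 ^ 2) / P) *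
      (Matrix.of fun j i : Fin m => ∏ l ∈ Finset.univ.erase i, (β j.succ ^ 2 - y l ^ 2)) *
      Matrix.diagonal (fun i => 2 * y i / (β 0 ^ 2 - y i ^ 2)) := by
    ext j i
    rw [Matrix.mul_diagonal, Matrix.diagonal_mul]
    simp only [Jm, Matrix.of_apply]
    have hPe : P = (β 0 ^ 2 - y i ^ 2) * ∏ l ∈ Finset.univ.erase i, (β 0 ^ 2 - y l ^ 2) :=
      (Finset.mul_prod_erase _ _ (Finset.mem_univ i)).symm
    have hE : ∏ l ∈ Finset.univ.erase i, (β 0 ^ 2 - y l ^ 2) ≠ 0 := Finset.prod_ne_zero_iff.mpr fun i _ => h i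
    rw [hPe, Finset.prod_div_distrib]
    have := h i
    field_simp
  have hZ := detZ (fun j : Fin m => β j.succ ^ 2) (fun i => y i ^ 2) hy
  have hs := sg_prod hβ
  have hs0 := sg_zero (fun i => β i ^ 2)
  have hv := vdm_succ (fun i => β i ^ 2)
  have hg0 := abs_ne_zero.mpr (sg_ne hβ 0)
  have hv0 := abs_ne_zero.mpr (vdm_ne hβ)
  have hvv : |vv (fun i => β i ^ 2) (fun i => y i ^ 2) 0| = |P| / |sg (fun i => β i ^ 2) 0| := by
    rw [vv, abs_div]
  rw [e, Matrix.det_mul, Matrix.det_mul, abs_mul, abs_mul, hZ, Matrix.det_diagonal, Matrix.det_diagonal,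
    Finset.prod_div_distrib, Finset.prod_div_distrib, ← hP, Finset.prod_mul_distrib, hvv]
  simp only [Kc]
  rw [Finset.prod_div_distrib]
  simp only [Finset.prod_const, Finset.card_univ, Fintype.card_fin, abs_div, abs_mul, abs_pow] at hs ⊢
  have hva : |vdm fun i => β i ^ 2| = |sg (fun i => β i ^ 2) 0| * |vdm fun j : Fin m => β j.succ ^ 2| := by
    rw [hv, abs_mul, hs0]
  rw [← hs0]
  have hP0' := abs_ne_zero.mpr hP0
  have hSne : |∏ j : Fin m, sg (fun i => β i ^ 2) j.succ| ≠ 0 := by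
    intro h0; rw [h0, zero_mul] at hs; exact hv0 (by simpa using hs.symm)
  generalize |∏ j : Fin m, sg (fun i => β i ^ 2) j.succ| = S at *
  generalize |sg (fun i => β i ^ 2) 0| = g at *
  generalize |vdm fun i => β i ^ 2| = V at *
  generalize |vdm fun j : Fin m => β j.succ ^ 2| = V' at *
  generalize |vdm fun j : Fin m => y j ^ 2| = W at *
  have hS : S = V ^ 2 / g := by field_simp; exact hs
  have hV' : V' = V / g := by field_simp; linarith
  rw [hS, hV', div_pow]
  field_simp
  try ring

def orth (m : ℕ) : Set (Fin m → ℝ) := {w | ∀ j, 0 < w j}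

lemma orth_meas (m : ℕ) : MeasurableSet (orth m) := by
  have : orth m = Set.univ.pi fun _ => Set.Ioi 0 := by ext; simp [orth]
  rw [this]
  exact MeasurableSet.univ_pi fun _ => measurableSet_Ioi

lemma orth_scale {m : ℕ} (t : ℝ) (ht : 0 < t) (f : (Fin m → ℝ) → ENNReal) :
    ∫⁻ w in orth m, f w = ∫⁻ s in orth m, ENNReal.ofReal (t ^ m) * f (t • s) := by
  have hi : (fun s : Fin m → ℝ => t • s) '' orth m = orth m := by
    ext w
    constructor
    · rintro ⟨s, hs, rfl⟩ j
      exact mul_pos ht (hs j)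
    · intro hw
      refine ⟨t⁻¹ • w, fun j => mul_pos (inv_pos.mpr ht) (hw j), ?_⟩
      simp [smul_smul, ht.ne']
  have h := lintegral_image_eq_lintegral_abs_det_fderiv_mul volume (orth_meas m)
    (f := fun s : Fin m → ℝ => t • s) (f' := fun _ => t • ContinuousLinearMap.id ℝ (Fin m → ℝ))
    (fun x _ => ((hasFDerivAt_id x).const_smul t).hasFDerivWithinAt)
    (fun x _ y _ hxy => by
      have := congrArg (fun v => t⁻¹ • v) hxy
      simpa [smul_smul, ht.ne'] using this) f
  rw [hi] at h
  rw [h]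
  have hd : (t • ContinuousLinearMap.id ℝ (Fin m → ℝ)).det = t ^ m := by
    rw [ContinuousLinearMap.det, ContinuousLinearMap.coe_smul, LinearMap.det_smul]
    simp
  simp only [hd, abs_of_pos (pow_pos ht m)]

lemma orth_split {m : ℕ} (f : ℝ → (Fin m → ℝ) → ENNReal) (hf : Measurable (Function.uncurry f)) :
    ∫⁻ w in orth (m + 1), f (w 0) (fun j => w j.succ) = ∫⁻ t in Set.Ioi (0:ℝ), ∫⁻ s in orth m, f t s := by
  have h := (volume_preserving_piFinSuccAbove (fun _ : Fin (m + 1) => ℝ) 0).setLIntegral_comp_preimage_emb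
    (MeasurableEquiv.measurableEmbedding _) (Function.uncurry f) (Set.Ioi 0 ×ˢ orth m)
  rw [Measure.volume_eq_prod, setLIntegral_prod _ hf.aemeasurable] at h
  rw [show orth (m + 1) = ⇑(MeasurableEquiv.piFinSuccAbove (fun _ : Fin (m + 1) => ℝ) 0) ⁻¹' (Set.Ioi 0 ×ˢ orth m) from ?_]
  · rw [show (fun t : ℝ => ∫⁻ s in orth m, f t s) = fun x => ∫⁻ y in orth m, Function.uncurry f (x, y) from rfl, ← h]
    rfl
  · ext w
    simp only [orth, Set.mem_setOf_eq, Set.mem_preimage, Set.mem_prod, Set.mem_Ioi]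
    rw [Fin.forall_fin_succ]
    rfl

lemma gamma_lint {a r : ℝ} (ha : 0 < a) (hr : 0 < r) :
    ∫⁻ t in Set.Ioi (0:ℝ), ENNReal.ofReal (t ^ (a - 1) * Real.exp (-(r * t))) =
      ENNReal.ofReal ((1 / r) ^ a * Real.Gamma a) := by
  have hG := Real.Gamma_pos_of_pos ha
  rw [← Real.integral_rpow_mul_exp_neg_mul_Ioi ha hr, ofReal_integral_eq_lintegral_ofReal]
  · by_contra hni
    have := Real.integral_rpow_mul_exp_neg_mul_Ioi ha hr
    rw [integral_undef hni] at this
    have h2 : 0 < (1 / r) ^ a * Real.Gamma a := by positivity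
    linarith
  · refine (ae_restrict_iff' measurableSet_Ioi).mpr (Filter.Eventually.of_forall fun t ht => ?_)
    have : (0:ℝ) < t := ht
    simp only [Pi.zero_apply]
    positivity

lemma simplex_push {m : ℕ} (α : ℝ) (hα : 0 < α) (G : (Fin m → ℝ) → ENNReal) (hG : Measurable G) :
    ∫⁻ w in orth (m + 1), G (fun j => w j.succ / w 0) * ENNReal.ofReal (w 0 ^ (α - 1) * Real.exp (-∑ j, w j)) =
      ∫⁻ s in orth m, G s * ENNReal.ofReal ((1 / (1 + ∑ j, s j)) ^ (m + α) * Real.Gamma (m + α)) := by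
  have h1 := orth_split (m := m) (fun t s => G (fun j => s j / t) *
    ENNReal.ofReal (t ^ (α - 1) * Real.exp (-(t + ∑ j, s j)))) (by
      refine Measurable.mul (hG.comp ?_) (Measurable.ennreal_ofReal ?_)
      · refine measurable_pi_lambda _ fun j => ?_
        fun_prop
      · fun_prop)
  simp only [Fin.sum_univ_succ]
  rw [h1]
  have h2 : ∫⁻ t in Set.Ioi (0:ℝ), ∫⁻ s in orth m, G (fun j => s j / t) *
      ENNReal.ofReal (t ^ (α - 1) * Real.exp (-(t + ∑ j, s j))) =
      ∫⁻ t in Set.Ioi (0:ℝ), ∫⁻ s in orth m, G s *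
        ENNReal.ofReal (t ^ (m + α - 1) * Real.exp (-((1 + ∑ j, s j) * t))) := by
    refine setLIntegral_congr_fun measurableSet_Ioi fun t ht => ?_
    have ht : (0:ℝ) < t := ht
    rw [orth_scale t ht]
    refine lintegral_congr fun s => ?_
    have e1 : (fun j => (t • s) j / t) = s := by
      ext j; simp [ht.ne']
    rw [e1, mul_left_comm, ← ENNReal.ofReal_mul (by positivity)]
    congr 2
    have e2 : t ^ ((m:ℝ) + α - 1) = t ^ m * t ^ (α - 1) := by
      rw [add_sub_assoc, Real.rpow_add ht, Real.rpow_natCast]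
    rw [e2, mul_assoc]
    congr 3
    simp only [Pi.smul_apply, smul_eq_mul, ← Finset.mul_sum]
    ring
  rw [h2, lintegral_lintegral_swap]
  swap
  · refine Measurable.aemeasurable ?_
    refine Measurable.mul (hG.comp measurable_snd) (Measurable.ennreal_ofReal ?_)
    fun_prop
  refine setLIntegral_congr_fun (orth_meas m) fun s hs => ?_
  rw [lintegral_const_mul _ (by fun_prop), gamma_lint (by positivity)]
  have : 0 ≤ ∑ j, s j := Finset.sum_nonneg fun j _ => (hs j).le
  linarith

lemma box_meas {m : ℕ} (β : Fin (m + 1) → ℝ) : MeasurableSet (boxB β) := by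
  have : boxB β = Set.univ.pi fun i => Set.Ioo (β i.castSucc) (β i.succ) := by ext; simp [boxB]
  rw [this]
  exact MeasurableSet.univ_pi fun _ => measurableSet_Ioo

lemma sq_mono {m : ℕ} {β : Fin (m + 1) → ℝ} (hβ : StrictMono β) (h0 : 0 ≤ β 0) : StrictMono fun i => β i ^ 2 := by
  intro i j h
  have h1 := hβ h
  have h2 : β 0 ≤ β i := hβ.monotone (Fin.zero_le i)
  simp only
  nlinarith

lemma box_pos {m : ℕ} {β : Fin (m + 1) → ℝ} (hβ : StrictMono β) (h0 : 0 ≤ β 0) {y : Fin m → ℝ}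
    (hy : y ∈ boxB β) (i : Fin m) : 0 < y i := by
  have h2 : β 0 ≤ β i.castSucc := hβ.monotone (Fin.zero_le _)
  linarith [(hy i).1]

lemma box_sq {m : ℕ} {β : Fin (m + 1) → ℝ} (hβ : StrictMono β) (h0 : 0 ≤ β 0) {y : Fin m → ℝ}
    (hy : y ∈ boxB β) : (fun i => y i ^ 2) ∈ boxB fun i => β i ^ 2 := by
  intro i
  have h1 := box_pos hβ h0 hy i
  have h2 : β 0 ≤ β i.castSucc := hβ.monotone (Fin.zero_le _)
  have := hy i
  constructor <;> simp only <;> nlinarith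

lemma box_mono {m : ℕ} {β : Fin (m + 1) → ℝ} (hβ : StrictMono β) {y : Fin m → ℝ}
    (hy : y ∈ boxB β) : StrictMono y := by
  intro i l h
  have h2 : β i.succ ≤ β l.castSucc := hβ.monotone (by rw [Fin.le_def]; simp; omega)
  linarith [(hy i).2, (hy l).1]

lemma Phi_sum {m : ℕ} {β : Fin (m + 1) → ℝ} (hβ : StrictMono β) (h0 : 0 ≤ β 0) {y : Fin m → ℝ}
    (hy : y ∈ boxB β) : 1 + ∑ j, Phi β y j = 1 / vv (fun i => β i ^ 2) (fun i => y i ^ 2) 0 := by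
  have h1 := vv_pos (sq_mono hβ h0) (box_sq hβ h0 hy) 0
  have h2 := vv_sum (sq_mono hβ h0).injective (fun i => y i ^ 2)
  rw [Fin.sum_univ_succ] at h2
  simp only [Phi_eq]
  rw [← Finset.sum_div]
  field_simp
  exact h2

lemma Phi_inj {m : ℕ} {β : Fin (m + 1) → ℝ} (hβ : StrictMono β) (h0 : 0 ≤ β 0) :
    Set.InjOn (Phi β) (boxB β) := by
  intro y hy z hz h
  have h1 := Phi_sum hβ h0 hy
  have h2 := Phi_sum hβ h0 hz
  rw [h, h2] at h1
  have p1 := vv_pos (sq_mono hβ h0) (box_sq hβ h0 hy) 0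
  have p2 := vv_pos (sq_mono hβ h0) (box_sq hβ h0 hz) 0
  have e0 : vv (fun i => β i ^ 2) (fun i => y i ^ 2) 0 = vv (fun i => β i ^ 2) (fun i => z i ^ 2) 0 := by
    field_simp at h1
    exact h1
  have := vv_inj (sq_mono hβ h0) (box_sq hβ h0 hy) (box_sq hβ h0 hz) (by
    intro j
    refine Fin.cases e0 (fun j => ?_) j
    have := congrFun h j
    rw [Phi_eq, Phi_eq, e0] at this
    field_simp at this
    exact this)
  ext i
  have h3 := congrFun this i
  exact (pow_left_inj₀ (box_pos hβ h0 hy i).le (box_pos hβ h0 hz i).le two_ne_zero).mp h3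

lemma Phi_surj {m : ℕ} {β : Fin (m + 1) → ℝ} (hβ : StrictMono β) (h0 : 0 ≤ β 0)
    (W : Fin (m + 1) → ℝ) (hW : ∀ j, 0 < W j) : ∃ y ∈ boxB β,
      (∀ j, vv (fun i => β i ^ 2) (fun i => y i ^ 2) j = W j / ∑ k, W k) ∧
      Phi β y = fun j => W j.succ / W 0 := by
  obtain ⟨b, hb, hv⟩ := vv_surj (sq_mono hβ h0) W hW
  have hb0 : ∀ i, 0 < b i := fun i => lt_of_le_of_lt (sq_nonneg _) (hb i).1
  have hsq : (fun i => Real.sqrt (b i) ^ 2) = b := by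
    ext i; exact Real.sq_sqrt (hb0 i).le
  have hv' : ∀ j, vv (fun i => β i ^ 2) (fun i => Real.sqrt (b i) ^ 2) j = W j / ∑ k, W k := by
    rw [hsq]; exact hv
  have hSpos : 0 < ∑ k, W k := Finset.sum_pos (fun k _ => hW k) ⟨0, Finset.mem_univ 0⟩
  refine ⟨fun i => Real.sqrt (b i), fun i => ?_, hv', ?_⟩
  · have h2 : β 0 ≤ β i.castSucc := hβ.monotone (Fin.zero_le _)
    have h3 : β 0 ≤ β i.succ := hβ.monotone (Fin.zero_le _)
    exact ⟨Real.lt_sqrt_of_sq_lt (hb i).1, (Real.sqrt_lt' (lt_of_lt_of_le' (hβ (Fin.succ_pos i)) h0)).mpr (hb i).2⟩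
  · ext j
    rw [Phi_eq, hv', hv']
    have := hW 0
    field_simp

lemma Phi_image {m : ℕ} {β : Fin (m + 1) → ℝ} (hβ : StrictMono β) (h0 : 0 ≤ β 0) :
    Phi β '' boxB β = orth m := by
  ext s
  constructor
  · rintro ⟨y, hy, rfl⟩ j
    rw [Phi_eq]
    exact div_pos (vv_pos (sq_mono hβ h0) (box_sq hβ h0 hy) _) (vv_pos (sq_mono hβ h0) (box_sq hβ h0 hy) _)
  · intro hs
    obtain ⟨y, hy, _, h⟩ := Phi_surj hβ h0 (Fin.cons 1 s) (by
      intro j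
      refine Fin.cases ?_ (fun j => ?_) j
      · simp
      · simpa using hs j)
    exact ⟨y, hy, by rw [h]; ext j; simp⟩

lemma box_ne {m : ℕ} {β : Fin (m + 1) → ℝ} (hβ : StrictMono β) (h0 : 0 ≤ β 0) {y : Fin m → ℝ}
    (hy : y ∈ boxB β) (i : Fin m) : β 0 ^ 2 - y i ^ 2 ≠ 0 := by
  have h1 := (box_sq hβ h0 hy i).1
  have h2 : β 0 ^ 2 ≤ β i.castSucc ^ 2 := (sq_mono hβ h0).monotone (Fin.zero_le _)
  simp only at h1
  linarith

lemma Phi_cov {m : ℕ} {β : Fin (m + 1) → ℝ} (hβ : StrictMono β) (h0 : 0 ≤ β 0) (F : (Fin m → ℝ) → ENNReal) :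
    ∫⁻ s in orth m, F s = ∫⁻ y in boxB β, ENNReal.ofReal
      ((vv (fun i => β i ^ 2) (fun i => y i ^ 2) 0 ^ (m + 1))⁻¹ *
      ((vdm fun i => y i ^ 2) / (vdm fun i => β i ^ 2)) * ∏ i, (2 * y i)) * F (Phi β y) := by
  rw [← Phi_image hβ h0, lintegral_image_eq_lintegral_abs_det_fderiv_mul volume (box_meas β)
    (f' := fun y => LinearMap.toContinuousLinearMap (Matrix.toLin' (Jm β y)))
    (fun y hy => (Phi_deriv β y (box_ne hβ h0 hy)).hasFDerivWithinAt) (Phi_inj hβ h0)]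
  refine setLIntegral_congr_fun (box_meas β) fun y hy => ?_
  have hm := box_mono hβ hy
  have hm2 : StrictMono fun i => y i ^ 2 := by
    intro i l h
    have h1 := hm h
    have h2 := box_pos hβ h0 hy i
    simp only
    nlinarith
  have hdet : (LinearMap.toContinuousLinearMap (Matrix.toLin' (Jm β y))).det = (Jm β y).det := by
    rw [ContinuousLinearMap.det]
    simp
  rw [hdet, Jm_det (sq_mono hβ h0).injective hm2.injective (box_ne hβ h0 hy),
    abs_of_pos (vv_pos (sq_mono hβ h0) (box_sq hβ h0 hy) 0), abs_of_pos (vdm_pos hm2),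
    abs_of_pos (vdm_pos (sq_mono hβ h0)),
    abs_of_pos (Finset.prod_pos fun i _ => mul_pos two_pos (box_pos hβ h0 hy i))]

lemma weight_law {m : ℕ} {β : Fin (m + 1) → ℝ} (hβ : StrictMono β) (h0 : 0 ≤ β 0) (α : ℝ) (hα : 0 < α)
    (G : (Fin m → ℝ) → ENNReal) (hG : Measurable G) :
    ∫⁻ w in orth (m + 1), G (fun j => w j.succ / w 0) * ENNReal.ofReal (w 0 ^ (α - 1) * Real.exp (-∑ j, w j)) =
      ∫⁻ y in boxB β, G (Phi β y) * ENNReal.ofReal (Real.Gamma (m + α) *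
        (vv (fun i => β i ^ 2) (fun i => y i ^ 2) 0 ^ (α - 1) *
      ((vdm fun i => y i ^ 2) / (vdm fun i => β i ^ 2)) * ∏ i, (2 * y i))) := by
  rw [simplex_push α hα G hG, Phi_cov hβ h0]
  refine setLIntegral_congr_fun (box_meas β) fun y hy => ?_
  have hv := vv_pos (sq_mono hβ h0) (box_sq hβ h0 hy) 0
  have hm := box_mono hβ hy
  have hm2 : StrictMono fun i => y i ^ 2 := by
    intro i l h
    have h1 := hm h
    have h2 := box_pos hβ h0 hy i
    simp only
    nlinarith
  have hp1 := vdm_pos hm2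
  have hp2 := vdm_pos (sq_mono hβ h0)
  have hp3 : 0 < ∏ i, (2 * y i) := Finset.prod_pos fun i _ => mul_pos two_pos (box_pos hβ h0 hy i)
  rw [mul_left_comm, ← ENNReal.ofReal_mul (by positivity), Phi_sum hβ h0 hy]
  congr 2
  rw [one_div_one_div]
  set v := vv (fun i => β i ^ 2) (fun i => y i ^ 2) 0
  have e : v ^ ((m:ℝ) + α) = v ^ (m + 1) * v ^ (α - 1) := by
    rw [← Real.rpow_natCast, ← Real.rpow_add hv]
    congr 1
    push_cast; ring
  rw [e]
  field_simp

lemma sq_cov (f : ℝ → ENNReal) : ∫⁻ t in Set.Ioi (0:ℝ), f t = ∫⁻ r in Set.Ioi (0:ℝ), ENNReal.ofReal (2 * r) * f (r ^ 2) := by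
  have hi : (fun r : ℝ => r ^ 2) '' Set.Ioi 0 = Set.Ioi 0 := by
    ext t
    constructor
    · rintro ⟨r, hr, rfl⟩
      have : (0:ℝ) < r := hr
      exact pow_pos this 2
    · intro ht
      have ht : (0:ℝ) < t := ht
      exact ⟨Real.sqrt t, Real.sqrt_pos.mpr ht, Real.sq_sqrt ht.le⟩
  have h := lintegral_image_eq_lintegral_abs_deriv_mul (s := Set.Ioi (0:ℝ)) (f := fun r : ℝ => r ^ 2) (f' := fun r => 2 * r)
    measurableSet_Ioi (fun r _ => by simpa using (hasDerivAt_pow 2 r).hasDerivWithinAt)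
    (fun x hx y hy hxy => (pow_left_inj₀ (le_of_lt hx) (le_of_lt hy) two_ne_zero).mp hxy) f
  rw [hi] at h
  rw [h]
  refine setLIntegral_congr_fun measurableSet_Ioi fun r hr => ?_
  have hr : (0:ℝ) < r := hr
  simp only [abs_of_pos (mul_pos two_pos hr)]

lemma polar_push (f : ℝ → ENNReal) (hf : Measurable f) :
    ∫⁻ p : ℝ × ℝ, f (p.1 ^ 2 + p.2 ^ 2) = ENNReal.ofReal Real.pi * ∫⁻ t in Set.Ioi (0:ℝ), f t := by
  rw [← lintegral_comp_polarCoord_symm, polarCoord_target, Measure.volume_eq_prod, setLIntegral_prod]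
  · rw [sq_cov f, ← lintegral_const_mul _ (by fun_prop)]
    refine setLIntegral_congr_fun measurableSet_Ioi fun r hr => ?_
    have hr : (0:ℝ) < r := hr
    simp only [polarCoord_symm_apply]
    have e : ∀ θ : ℝ, (r * Real.cos θ) ^ 2 + (r * Real.sin θ) ^ 2 = r ^ 2 := by
      intro θ
      have := Real.cos_sq_add_sin_sq θ
      linear_combination r ^ 2 * this
    simp only [e]
    rw [lintegral_const, Measure.restrict_apply MeasurableSet.univ, Set.univ_inter, Real.volume_Ioo, smul_eq_mul,
      mul_comm, ← mul_assoc, ← mul_assoc, ← ENNReal.ofReal_mul (by linarith [Real.pi_pos]), ← ENNReal.ofReal_mul Real.pi_pos.le]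
    congr 2
    ring
  · refine Measurable.aemeasurable ?_
    have : Continuous (fun p : ℝ × ℝ => (polarCoord.symm p).1 ^ 2 + (polarCoord.symm p).2 ^ 2) := by
      simp only [polarCoord_symm_apply]
      fun_prop
    exact (Measurable.ennreal_ofReal measurable_fst).mul (hf.comp this.measurable)

lemma even_push (f : ℝ → ENNReal) (hf : Measurable f) :
    ∫⁻ x : ℝ, f (x ^ 2) = ∫⁻ t in Set.Ioi (0:ℝ), f t * ENNReal.ofReal (t ^ (-(1/2):ℝ)) := by
  rw [sq_cov]
  have h1 : ∫⁻ x in Set.Iic (0:ℝ), f (x ^ 2) = ∫⁻ x in Set.Ioi (0:ℝ), f (x ^ 2) := by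
    rw [setLIntegral_congr (Iio_ae_eq_Iic (a := (0:ℝ))).symm]
    have := (Measure.measurePreserving_neg (volume : Measure ℝ)).setLIntegral_comp_preimage_emb
      (MeasurableEquiv.neg ℝ).measurableEmbedding (fun x => f (x ^ 2)) (Set.Iio 0)
    rw [← this]
    simp
  rw [← lintegral_add_compl _ (measurableSet_Ioi (a := (0:ℝ))), Set.compl_Ioi, h1, ← two_mul,
    ← lintegral_const_mul _ (by fun_prop)]
  refine setLIntegral_congr_fun measurableSet_Ioi fun r hr => ?_
  have hr : (0:ℝ) < r := hr
  rw [mul_left_comm, ← ENNReal.ofReal_mul (by positivity)]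
  have : 2 * r * (r ^ 2) ^ (-(1/2):ℝ) = 2 := by
    rw [← Real.rpow_natCast, ← Real.rpow_mul hr.le]
    norm_num
    rw [Real.rpow_neg_one]
    field_simp
  rw [this, mul_comm]
  simp

lemma peel0 {N : ℕ} (f : ℝ → (Fin N → ℝ) → ENNReal) (hf : Measurable (Function.uncurry f)) :
    ∫⁻ u : Fin (N + 1) → ℝ, f (u 0) (fun j => u j.succ) = ∫⁻ t, ∫⁻ s, f t s := by
  have h := (volume_preserving_piFinSuccAbove (fun _ : Fin (N + 1) => ℝ) 0).lintegral_comp_emb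
    (MeasurableEquiv.measurableEmbedding _) (Function.uncurry f)
  rw [Measure.volume_eq_prod, lintegral_prod _ hf.aemeasurable] at h
  exact h

lemma peelL {N : ℕ} (f : ℝ → (Fin N → ℝ) → ENNReal) (hf : Measurable (Function.uncurry f)) :
    ∫⁻ u : Fin (N + 1) → ℝ, f (u (Fin.last N)) (fun j => u j.castSucc) = ∫⁻ t, ∫⁻ s, f t s := by
  have h := (volume_preserving_piFinSuccAbove (fun _ : Fin (N + 1) => ℝ) (Fin.last N)).lintegral_comp_emb
    (MeasurableEquiv.measurableEmbedding _) (Function.uncurry f)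
  rw [Measure.volume_eq_prod, lintegral_prod _ hf.aemeasurable] at h
  refine Eq.trans ?_ h
  refine lintegral_congr fun u => ?_
  simp [Function.uncurry, MeasurableEquiv.piFinSuccAbove, Fin.insertNthEquiv, Fin.removeNth]
  rfl

def wE (k : ℕ) (u : Fin (2 * k) → ℝ) (j : Fin k) : ℝ :=
  u ⟨2 * j.val, by have := j.isLt; omega⟩ ^ 2 + u ⟨2 * j.val + 1, by have := j.isLt; omega⟩ ^ 2

lemma wE_meas (k : ℕ) : Measurable (wE k) := by
  refine measurable_pi_lambda _ fun j => ?_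
  simp only [wE]
  fun_prop

lemma cons_meas {m : ℕ} : Measurable fun p : ℝ × (Fin m → ℝ) => (Fin.cons p.1 p.2 : Fin (m + 1) → ℝ) := by
  refine measurable_pi_lambda _ fun j => ?_
  refine Fin.cases ?_ (fun j => ?_) j
  · simpa using measurable_fst
  · simp only [Fin.cons_succ]
    fun_prop

lemma wE_succ (k : ℕ) (u : Fin (2 * k + 1 + 1) → ℝ) :
    wE (k + 1) u = Fin.cons (u 0 ^ 2 + u (Fin.succ 0) ^ 2) (wE k fun j => u j.succ.succ) := by
  ext j
  refine Fin.cases ?_ (fun j => ?_) j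
  · simp only [wE, Fin.cons_zero]
    rfl
  · simp only [wE, Fin.cons_succ]
    rfl

lemma even_law (k : ℕ) (F : (Fin k → ℝ) → ENNReal) (hF : Measurable F) :
    ∫⁻ u, F (wE k u) = ENNReal.ofReal (Real.pi ^ k) * ∫⁻ w in orth k, F w := by
  induction k with
  | zero =>
    have h : orth 0 = Set.univ := by ext; simp [orth]
    rw [h, Measure.restrict_univ]
    simp only [pow_zero, ENNReal.ofReal_one, one_mul]
    refine lintegral_congr fun u => ?_
    congr 1
    exact Subsingleton.elim _ _
  | succ k ih =>
    have hF2 : Measurable fun p : ℝ × (Fin k → ℝ) => F (Fin.cons p.1 p.2) := hF.comp cons_meas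
    have h1 : ∫⁻ u, F (wE (k + 1) u) = ∫⁻ x : ℝ, ∫⁻ u' : Fin (2 * k + 1) → ℝ,
        F (Fin.cons (x ^ 2 + u' 0 ^ 2) (wE k fun j => u' j.succ)) := by
      rw [← peel0 (fun x u' => F (Fin.cons (x ^ 2 + u' 0 ^ 2) (wE k fun j => u' j.succ)))]
      · refine lintegral_congr fun u => ?_
        congr 1
        exact wE_succ k u
      · have q : Measurable fun p : ℝ × (Fin (2 * k + 1) → ℝ) => (p.1 ^ 2 + p.2 0 ^ 2, wE k fun j => p.2 j.succ) := by
          refine Measurable.prodMk (by fun_prop) ((wE_meas k).comp (g := wE k) (f := fun p : ℝ × (Fin (2 * k + 1) → ℝ) => fun j => p.2 j.succ) ?_)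
          refine measurable_pi_lambda _ fun j => ?_
          fun_prop
        exact hF2.comp q
    have h2 : ∀ x : ℝ, ∫⁻ u' : Fin (2 * k + 1) → ℝ,
        F (Fin.cons (x ^ 2 + u' 0 ^ 2) (wE k fun j => u' j.succ)) =
        ∫⁻ y : ℝ, ENNReal.ofReal (Real.pi ^ k) * ∫⁻ s in orth k, F (Fin.cons (x ^ 2 + y ^ 2) s) := by
      intro x
      rw [peel0 (fun y u' => F (Fin.cons (x ^ 2 + y ^ 2) (wE k u')))]
      · refine lintegral_congr fun y => ?_
        exact ih (fun s => F (Fin.cons (x ^ 2 + y ^ 2) s)) (hF2.comp (measurable_const.prodMk measurable_id))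
      · refine hF2.comp (Measurable.prodMk ?_ ((wE_meas k).comp ?_))
        · fun_prop
        · exact measurable_snd
    set f : ℝ → ENNReal := fun t => ∫⁻ s in orth k, F (Fin.cons t s)
    have hf : Measurable f := Measurable.lintegral_prod_right' (f := fun p : ℝ × (Fin k → ℝ) => F (Fin.cons p.1 p.2)) hF2
    rw [h1]
    simp_rw [h2]
    rw [← lintegral_prod (μ := volume) (ν := volume)
      (fun p : ℝ × ℝ => ENNReal.ofReal (Real.pi ^ k) * f (p.1 ^ 2 + p.2 ^ 2)) (by
        refine Measurable.aemeasurable (measurable_const.mul (hf.comp ?_)); fun_prop),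
      lintegral_const_mul _ (by fun_prop), ← Measure.volume_eq_prod, polar_push f hf, ← mul_assoc,
      ← ENNReal.ofReal_mul (by positivity), ← pow_succ]
    congr 1
    rw [← orth_split (fun t s => F (Fin.cons t s)) hF2]
    refine lintegral_congr fun w => ?_
    congr 1
    ext j
    refine Fin.cases ?_ (fun j => ?_) j <;> simp

def wO (m : ℕ) (u : Fin (2 * m + 1) → ℝ) : Fin (m + 1) → ℝ :=
  Fin.cons (u (Fin.last _) ^ 2) (wE m fun i => u i.castSucc)

lemma wO_meas (m : ℕ) : Measurable (wO m) := by
  have q : Measurable fun u : Fin (2 * m + 1) → ℝ => (u (Fin.last _) ^ 2, wE m fun i => u i.castSucc) := by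
    refine Measurable.prodMk (by fun_prop) ((wE_meas m).comp (g := wE m) (f := fun u : Fin (2 * m + 1) → ℝ => fun i => u i.castSucc) ?_)
    refine measurable_pi_lambda _ fun j => ?_
    fun_prop
  exact cons_meas.comp q

lemma odd_law (m : ℕ) (F : (Fin (m + 1) → ℝ) → ENNReal) (hF : Measurable F) :
    ∫⁻ u, F (wO m u) = ENNReal.ofReal (Real.pi ^ m) * ∫⁻ w in orth (m + 1), F w * ENNReal.ofReal (w 0 ^ (-(1/2):ℝ)) := by
  have hF2 : Measurable fun p : ℝ × (Fin m → ℝ) => F (Fin.cons p.1 p.2) := hF.comp cons_meas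
  set f : ℝ → ENNReal := fun t => ∫⁻ s in orth m, F (Fin.cons t s) with hfd
  have hf : Measurable f := Measurable.lintegral_prod_right' (f := fun p : ℝ × (Fin m → ℝ) => F (Fin.cons p.1 p.2)) hF2
  have h1 : ∫⁻ u, F (wO m u) = ∫⁻ x : ℝ, ENNReal.ofReal (Real.pi ^ m) * f (x ^ 2) := by
    simp only [wO]
    rw [peelL (fun x u => F (Fin.cons (x ^ 2) (wE m u)))]
    · refine lintegral_congr fun x => ?_
      exact even_law m (fun s => F (Fin.cons (x ^ 2) s)) (hF2.comp (measurable_const.prodMk measurable_id))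
    · refine hF2.comp (Measurable.prodMk ?_ ((wE_meas m).comp measurable_snd))
      fun_prop
  rw [h1, lintegral_const_mul _ (by fun_prop), even_push f hf]
  congr 1
  have h2 := orth_split (fun t s => F (Fin.cons t s) * ENNReal.ofReal (t ^ (-(1/2):ℝ))) (by
    refine hF2.mul (Measurable.ennreal_ofReal ?_); fun_prop)
  have h3 : ∀ w : Fin (m + 1) → ℝ, (Fin.cons (w 0) (fun j : Fin m => w j.succ) : Fin (m + 1) → ℝ) = w := by
    intro w
    ext j
    refine Fin.cases ?_ (fun j => ?_) j <;> simp
  simp only [h3] at h2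
  rw [h2]
  refine lintegral_congr fun t => ?_
  have q : Measurable fun s : Fin m → ℝ => F (Fin.cons t s) := hF2.comp (measurable_const.prodMk measurable_id)
  rw [lintegral_mul_const _ q]

def extN {m : ℕ} (y : Fin m → ℝ) (i : ℕ) : ℝ := if h : i < m then y ⟨i, h⟩ else 0

lemma extN_lt {m : ℕ} (y : Fin m → ℝ) (i : Fin m) : extN y i.val = y i := by
  simp [extN]

lemma Dgen_ext_meas (N m : ℕ) : Measurable fun y : Fin m → ℝ => Dgen N (extN y) := by
  refine measurable_pi_lambda _ fun i => measurable_pi_lambda _ fun j => ?_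
  simp only [Dgen, Matrix.of_apply]
  split_ifs
  all_goals first | exact measurable_const | skip
  all_goals
    refine Measurable.mul_const ?_ _
    unfold extN
    split_ifs
    · exact measurable_pi_apply _
    · exact measurable_const

lemma ext_G {m : ℕ} {β : Fin (m + 1) → ℝ} (hβ : StrictMono β) (h0 : 0 ≤ β 0) (Ψ : (Fin m → ℝ) → ENNReal)
    (hΨ : Measurable Ψ) : ∃ G : (Fin m → ℝ) → ENNReal, Measurable G ∧ ∀ y ∈ boxB β, G (Phi β y) = Ψ y := by
  have he := measurableEmbedding_of_fderivWithin (f := Phi β) (box_meas β)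
    (f' := fun y => LinearMap.toContinuousLinearMap (Matrix.toLin' (Jm β y)))
    (fun y hy => (Phi_deriv β y (box_ne hβ h0 hy)).hasFDerivWithinAt) (Phi_inj hβ h0)
  refine ⟨_, he.measurable_extend (g := fun y : boxB β => Ψ y.1) (g' := fun _ => 0)
    (hΨ.comp measurable_subtype_coe) measurable_const, fun y hy => ?_⟩
  exact he.injective.extend_apply (fun y : boxB β => Ψ y.1) _ ⟨y, hy⟩

lemma gauss_mass (N : ℕ) : ∫⁻ u, gw (N := N) u = ENNReal.ofReal (Real.sqrt Real.pi ^ N) := by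
  have h1 : ∫⁻ x : ℝ, ENNReal.ofReal (Real.exp (-(x * x))) = ENNReal.ofReal (Real.sqrt Real.pi) := by
    have h := integral_gaussian 1
    have hi := integrable_exp_neg_mul_sq (b := 1) one_pos
    rw [div_one] at h
    rw [← h, ofReal_integral_eq_lintegral_ofReal hi (Filter.Eventually.of_forall fun x => (Real.exp_pos _).le)]
    refine lintegral_congr fun x => ?_
    congr 2; ring
  induction N with
  | zero => simp [gw, volume_pi, Measure.pi_of_empty]
  | succ N ih =>
    have h2 : ∀ u : Fin (N + 1) → ℝ, gw u = ENNReal.ofReal (Real.exp (-(u 0 * u 0))) * gw (fun j : Fin N => u j.succ) := by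
      intro u
      rw [gw, gw, ← ENNReal.ofReal_mul (Real.exp_pos _).le, ← Real.exp_add]
      congr 2
      simp only [dotProduct, Fin.sum_univ_succ]
      ring
    simp_rw [h2]
    rw [peel0 (fun t s => ENNReal.ofReal (Real.exp (-(t * t))) * gw s) (by
      refine Measurable.mul (Measurable.ennreal_ofReal ?_) (gw_meas.comp measurable_snd)
      fun_prop)]
    simp_rw [lintegral_const_mul _ gw_meas, ih]
    rw [lintegral_mul_const _ (by fun_prop), h1, ← ENNReal.ofReal_mul (by positivity), pow_succ, mul_comm]

lemma step_point {N m : ℕ} {β : Fin (m + 1) → ℝ} (hβ : StrictMono β) (h0 : 0 ≤ β 0) (a : ℕ → ℝ)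
    (c : Fin (N + 1) → Fin (m + 1)) (hac : ∀ r : Fin (N + 1), a (r.val / 2) = β (c r))
    (hN : N = 2 * m ∨ (N = 2 * m + 1 ∧ 0 < β 0)) (ha : (N + 1) % 2 = 1 → a ((N + 1) / 2) = 0)
    (ψ : Matrix (Fin N) (Fin N) ℝ → ENNReal) (hψ : CInv ψ) (k : OG (N + 1)) (W : Fin (m + 1) → ℝ)
    (hWdef : W = fun j => ∑ r with c r = j, k.1 (Fin.last N) r ^ 2) (hW : ∀ j, 0 < W j) :
    ∃ y ∈ boxB β, Phi β y = (fun j => W j.succ / W 0) ∧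
      ψ ((k.1 * Dgen (N + 1) a * k.1ᵀ).submatrix Fin.castSucc Fin.castSucc) = ψ (Dgen N (extN y)) := by
  set u := k.1 (Fin.last N) with hu
  have hfib : ∀ g : Fin (m + 1) → ℝ, ∑ r, u r ^ 2 * g (c r) = ∑ j, W j * g j := by
    intro g
    rw [← Finset.sum_fiberwise Finset.univ c (fun r => u r ^ 2 * g (c r)), hWdef]
    refine Finset.sum_congr rfl fun j _ => ?_
    simp only
    rw [Finset.sum_mul]
    refine Finset.sum_congr rfl fun r hr => ?_
    rw [(Finset.mem_filter.mp hr).2]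
  have huu : u ⬝ᵥ u = 1 := by
    have := congrFun (congrFun (og_mul_transpose k) (Fin.last N)) (Fin.last N)
    rw [Matrix.one_apply_eq] at this
    exact this
  have hsum : ∑ j, W j = 1 := by
    have := hfib (fun _ => 1)
    simp only [mul_one] at this
    rw [← this, ← huu]
    simp only [dotProduct, sq]
  obtain ⟨y, hy, hv, hP⟩ := Phi_surj hβ h0 W hW
  refine ⟨y, hy, hP, ?_⟩
  have hyp := box_pos hβ h0 hy
  have hym := box_mono hβ hy
  have hbs := box_sq hβ h0 hy
  have hysq : ∀ i j, i ≠ j → y i ^ 2 ≠ y j ^ 2 := by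
    intro i j hij h
    exact hij (hym.injective ((pow_left_inj₀ (hyp i).le (hyp j).le two_ne_zero).mp h))
  have hyb : ∀ i j, y i ^ 2 ≠ β j ^ 2 := by
    intro i j h
    have h1 := hbs i
    simp only at h1
    rcases le_or_gt j i.castSucc with h2 | h2
    · have := (sq_mono hβ h0).monotone h2
      linarith
    · have := (sq_mono hβ h0).monotone (Fin.castSucc_lt_iff_succ_le.mp h2)
      linarith
  have hcase : ∀ i, 2 * i < N → (∃ i' : Fin m, i = i'.val ∧ extN y i = y i') ∨ (extN y i = 0 ∧ i = m ∧ 0 < β 0) := by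
    intro i hi
    by_cases h : i < m
    · exact Or.inl ⟨⟨i, h⟩, rfl, by simp [extN, h]⟩
    · right
      rcases hN with hN | ⟨hN, hb⟩
      · omega
      · exact ⟨by simp [extN, h], by omega, hb⟩
  obtain ⟨Q, hQ1, hQ2⟩ := exists_frame N a (extN y) u huu ha (by
    intro i hi r
    rw [hac]
    rcases hcase i hi with ⟨i', _, h⟩ | ⟨h, _, hb⟩
    · rw [h]; exact hyb _ _
    · rw [h]
      have : β 0 ≤ β (c r) := hβ.monotone (Fin.zero_le _)
      have hq : 0 < β (c r) := lt_of_lt_of_le hb this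
      have : 0 < β (c r) ^ 2 := by positivity
      intro h'; nlinarith) (by
    intro i j hi hj hij
    rcases hcase i hi with ⟨i', e, h⟩ | ⟨h, e, hb⟩ <;> rcases hcase j hj with ⟨j', e', h'⟩ | ⟨h', e', hb'⟩
    · rw [h, h']; exact hysq _ _ (by intro h; rw [h] at e; omega)
    · rw [h, h']; have := hyp i'; intro h2; have : 0 < y i' ^ 2 := by positivity
      nlinarith
    · rw [h, h']; have := hyp j'; intro h2; have : 0 < y j' ^ 2 := by positivity
      nlinarith
    · omega) (by
    intro i hi
    have him : i < m := by rcases hN with h | h <;> omega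
    rw [extN, dif_pos him]
    exact (hyp _).ne') (by
    intro i hi
    rcases hcase i hi with ⟨i', _, h⟩ | ⟨h, _, hb⟩
    · rw [h]
      have e1 : ∑ r : Fin (N + 1), u r ^ 2 / (y i' ^ 2 - a (r.val / 2) ^ 2) =
          ∑ j, vv (fun i => β i ^ 2) (fun i => y i ^ 2) j / (y i' ^ 2 - β j ^ 2) := by
        have := hfib (fun j => (y i' ^ 2 - β j ^ 2)⁻¹)
        simp only [hac, hv, hsum, div_one]
        simpa [div_eq_mul_inv] using this
      rw [e1, vv_sec (sq_mono hβ h0).injective (fun i => y i ^ 2) i' (hyb i'), mul_zero]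
    · rw [h, zero_mul])
  rw [same_row ψ hψ _ (Dgen_transpose _ _) k Q hQ1.symm, hQ2]

lemma step_gen {N m : ℕ} (ν : Measure (OG (N + 1))) [ν.IsMulLeftInvariant] [IsProbabilityMeasure ν]
    {β : Fin (m + 1) → ℝ} (hβ : StrictMono β) (h0 : 0 ≤ β 0) (a : ℕ → ℝ)
    (c : Fin (N + 1) → Fin (m + 1)) (hac : ∀ r : Fin (N + 1), a (r.val / 2) = β (c r))
    (hN : N = 2 * m ∨ (N = 2 * m + 1 ∧ 0 < β 0)) (ha : (N + 1) % 2 = 1 → a ((N + 1) / 2) = 0)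
    (w : (Fin (N + 1) → ℝ) → Fin (m + 1) → ℝ) (hwm : Measurable w)
    (hw : ∀ u j, w u j = ∑ r with c r = j, u r ^ 2)
    (α C0 : ℝ) (hα : 0 < α)
    (hpush : ∀ F : (Fin (m + 1) → ℝ) → ENNReal, Measurable F → ∫⁻ u, F (w u) * gw u =
      ENNReal.ofReal C0 * ∫⁻ s in orth (m + 1), F s * ENNReal.ofReal (s 0 ^ (α - 1) * Real.exp (-∑ j, s j)))
    (ψ : Matrix (Fin N) (Fin N) ℝ → ENNReal) (hψm : Measurable ψ) (hψ : CInv ψ) :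
    (∫⁻ k, ψ ((k.1 * Dgen (N + 1) a * k.1ᵀ).submatrix Fin.castSucc Fin.castSucc) ∂ν) *
        ENNReal.ofReal (Real.sqrt Real.pi ^ (N + 1)) =
      ENNReal.ofReal C0 * ∫⁻ y in boxB β, ψ (Dgen N (extN y)) * ENNReal.ofReal (Real.Gamma (m + α) *
        (vv (fun i => β i ^ 2) (fun i => y i ^ 2) 0 ^ (α - 1) *
      ((vdm fun i => y i ^ 2) / (vdm fun i => β i ^ 2)) * ∏ i, (2 * y i))) := by
  obtain ⟨G, hGm, hG⟩ := ext_G hβ h0 (fun y => ψ (Dgen N (extN y))) (hψm.comp (Dgen_ext_meas N m))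
  have hscale : ∀ t : ℝ, ∀ u j, w (t • u) j = t ^ 2 * w u j := by
    intro t u j
    rw [hw, hw, Finset.mul_sum]
    refine Finset.sum_congr rfl fun r _ => ?_
    simp [mul_pow]
  have hbad : ∀ᵐ k ∂ν, w (k.1 (Fin.last N)) ∈ orth (m + 1) := by
    have hI : Measurable ((orth (m + 1))ᶜ.indicator (fun _ => (1 : ENNReal))) :=
      measurable_const.indicator (orth_meas _).compl
    have h1 := row_law ν (fun u => (orth (m + 1))ᶜ.indicator (fun _ => 1) (w u)) (hI.comp hwm) (by
      intro t ht u
      have : w (t • u) ∈ (orth (m + 1))ᶜ ↔ w u ∈ (orth (m + 1))ᶜ := by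
        rw [Set.mem_compl_iff, Set.mem_compl_iff, not_iff_not]
        refine forall_congr' fun j => ?_
        rw [hscale]
        exact mul_pos_iff_of_pos_left (by positivity)
      by_cases h : w u ∈ (orth (m + 1))ᶜ
      · rw [Set.indicator_of_mem h, Set.indicator_of_mem (this.mpr h)]
      · rw [Set.indicator_of_notMem h, Set.indicator_of_notMem (fun h' => h (this.mp h'))])
    rw [hpush _ hI, setLIntegral_congr_fun (g := fun _ => 0) (orth_meas _) (fun s hs => by
      rw [Set.indicator_of_notMem (by simpa using hs), zero_mul]), lintegral_zero, mul_zero, gauss_mass] at h1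
    have hp : ENNReal.ofReal (Real.sqrt Real.pi ^ (N + 1)) ≠ 0 := by
      rw [Ne, ENNReal.ofReal_eq_zero, not_le]
      have := Real.sqrt_pos.mpr Real.pi_pos
      positivity
    have h2 := (mul_eq_zero.mp h1).resolve_right hp
    have hm : Measurable fun k : OG (N + 1) => k.1 (Fin.last N) :=
      (continuous_pi fun i => og_cont_entry (N + 1) (Fin.last N) i).measurable
    have hcm : Measurable fun k : OG (N + 1) => (orth (m + 1))ᶜ.indicator (fun _ => (1 : ENNReal)) (w (k.1 (Fin.last N))) :=
      (hI.comp hwm).comp hm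
    rw [lintegral_eq_zero_iff hcm] at h2
    filter_upwards [h2] with k hk
    by_contra h
    rw [Set.indicator_of_mem (show w (k.1 (Fin.last N)) ∈ (orth (m + 1))ᶜ from h)] at hk
    exact one_ne_zero hk
  have hf : ∀ᵐ k ∂ν, ψ ((k.1 * Dgen (N + 1) a * k.1ᵀ).submatrix Fin.castSucc Fin.castSucc) =
      G (fun j => w (k.1 (Fin.last N)) j.succ / w (k.1 (Fin.last N)) 0) := by
    filter_upwards [hbad] with k hk
    obtain ⟨y, hy, hP, he⟩ := step_point hβ h0 a c hac hN ha ψ hψ k (w (k.1 (Fin.last N)))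
      (funext fun j => hw _ j) hk
    rw [he, ← hP, hG y hy]
  have hGd : Measurable fun s : Fin (m + 1) → ℝ => G fun j => s j.succ / s 0 := by
    refine hGm.comp (measurable_pi_lambda _ fun j => ?_)
    fun_prop
  rw [lintegral_congr_ae hf, ← gauss_mass,
    row_law ν (fun u => G fun j => w u j.succ / w u 0) (hGd.comp hwm) (by
      intro t ht u
      congr 1
      ext j
      rw [hscale, hscale, mul_div_mul_left _ _ (by positivity)]),
    hpush (fun s => G fun j => s j.succ / s 0) hGd, weight_law hβ h0 α hα G hGm]
  congr 1
  refine setLIntegral_congr_fun (box_meas β) fun y hy => ?_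
  simp only [hG y hy]

lemma gw_fib {N m : ℕ} (c : Fin (N + 1) → Fin (m + 1)) (u : Fin (N + 1) → ℝ) (W : Fin (m + 1) → ℝ)
    (hw : ∀ j, W j = ∑ r with c r = j, u r ^ 2) : gw u = ENNReal.ofReal (Real.exp (-∑ j, W j)) := by
  rw [gw]
  congr 3
  simp_rw [hw]
  rw [Finset.sum_fiberwise Finset.univ c (fun r => u r ^ 2)]
  simp [dotProduct, sq]

lemma wE_hw (m : ℕ) (u : Fin (2 * m + 1 + 1) → ℝ) (j : Fin (m + 1)) :
    wE (m + 1) u j = ∑ r : Fin (2 * m + 1 + 1) with (⟨r.val / 2, by have := r.isLt; omega⟩ : Fin (m + 1)) = j, u r ^ 2 := by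
  have hs : (Finset.univ.filter fun r : Fin (2 * m + 1 + 1) => (⟨r.val / 2, by have := r.isLt; omega⟩ : Fin (m + 1)) = j) =
      {⟨2 * j.val, by have := j.isLt; omega⟩, ⟨2 * j.val + 1, by have := j.isLt; omega⟩} := by
    ext r
    simp only [Finset.mem_filter, Finset.mem_univ, true_and, Finset.mem_insert, Finset.mem_singleton, Fin.ext_iff]
    omega
  rw [hs, Finset.sum_pair (by simp [Fin.ext_iff])]
  rfl

def cO (m : ℕ) (r : Fin (2 * m + 1)) : Fin (m + 1) :=
  if h : r.val < 2 * m then ⟨r.val / 2 + 1, by omega⟩ else 0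

lemma wO_hw (m : ℕ) (u : Fin (2 * m + 1) → ℝ) (j : Fin (m + 1)) :
    wO m u j = ∑ r : Fin (2 * m + 1) with cO m r = j, u r ^ 2 := by
  refine Fin.cases ?_ (fun j => ?_) j
  · have hs : (Finset.univ.filter fun r : Fin (2 * m + 1) => cO m r = 0) = {Fin.last _} := by
      ext r
      have := r.isLt
      simp only [Finset.mem_filter, Finset.mem_univ, true_and, Finset.mem_singleton, Fin.ext_iff, cO]
      split_ifs <;> simp <;> omega
    rw [hs, Finset.sum_singleton]
    rfl
  · have hs : (Finset.univ.filter fun r : Fin (2 * m + 1) => cO m r = j.succ) =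
      {⟨2 * j.val, by have := j.isLt; omega⟩, ⟨2 * j.val + 1, by have := j.isLt; omega⟩} := by
      ext r
      have := r.isLt
      have := j.isLt
      simp only [Finset.mem_filter, Finset.mem_univ, true_and, Finset.mem_insert, Finset.mem_singleton, Fin.ext_iff, cO]
      split_ifs <;> simp <;> omega
    rw [hs, Finset.sum_pair (by simp [Fin.ext_iff])]
    rfl

lemma sqrt_pi_pow (k : ℕ) : Real.sqrt Real.pi ^ (2 * k) = Real.pi ^ k := by
  rw [pow_mul, Real.sq_sqrt Real.pi_pos.le]

lemma step_even {m : ℕ} (ν : Measure (OG (2 * m + 1 + 1))) [ν.IsMulLeftInvariant] [IsProbabilityMeasure ν]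
    {a : Fin (m + 1) → ℝ} (ha : StrictMono a) (h0 : 0 < a 0)
    (ψ : Matrix (Fin (2 * m + 1)) (Fin (2 * m + 1)) ℝ → ENNReal) (hψm : Measurable ψ) (hψ : CInv ψ) :
    (∫⁻ k, ψ ((k.1 * Dgen (2 * m + 1 + 1) (extN a) * k.1ᵀ).submatrix Fin.castSucc Fin.castSucc) ∂ν) =
      ∫⁻ y in boxB a, ψ (Dgen (2 * m + 1) (extN y)) * ENNReal.ofReal ((m.factorial : ℝ) *
        (((vdm fun i => y i ^ 2) / (vdm fun i => a i ^ 2)) * ∏ i, (2 * y i))) := by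
  have h := step_gen ν ha h0.le (extN a) (fun r => ⟨r.val / 2, by have := r.isLt; omega⟩)
    (fun r => by
      have : r.val / 2 < m + 1 := by have := r.isLt; omega
      simp [extN, this])
    (Or.inr ⟨rfl, h0⟩) (fun h => by omega) (wE (m + 1)) (wE_meas _) (wE_hw m) 1 (Real.pi ^ (m + 1)) one_pos
    (by
      intro F hF
      have := even_law (m + 1) (fun s => F s * ENNReal.ofReal (Real.exp (-∑ j, s j))) (by fun_prop)
      simp only [sub_self, Real.rpow_zero, one_mul]
      rw [← this]
      refine lintegral_congr fun u => ?_
      rw [gw_fib _ u (wE (m + 1) u) (wE_hw m u)]) ψ hψm hψ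
  have e : Real.sqrt Real.pi ^ (2 * m + 1 + 1) = Real.pi ^ (m + 1) := sqrt_pi_pow (m + 1)
  rw [e, mul_comm] at h
  have hp : 0 < Real.pi ^ (m + 1) := by positivity
  have := (ENNReal.mul_right_inj (by simpa using hp) ENNReal.ofReal_ne_top).mp h
  rw [this]
  refine lintegral_congr fun y => ?_
  rw [Real.Gamma_nat_eq_factorial]
  simp

lemma cons0_mono {m : ℕ} {y : Fin m → ℝ} (hy : StrictMono y) (h0 : ∀ i, 0 < y i) :
    StrictMono (Fin.cons 0 y : Fin (m + 1) → ℝ) := by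
  intro i j h
  induction i using Fin.cases with
  | zero =>
    induction j using Fin.cases with
    | zero => exact absurd h (lt_irrefl _)
    | succ j => simpa using h0 j
  | succ i =>
    induction j using Fin.cases with
    | zero => exact absurd h (by simp)
    | succ j => simpa using hy (by simpa using h)

lemma step_odd {m : ℕ} (ν : Measure (OG (2 * m + 1))) [ν.IsMulLeftInvariant] [IsProbabilityMeasure ν]
    {y : Fin m → ℝ} (hy : StrictMono y) (h0 : ∀ i, 0 < y i)
    (ψ : Matrix (Fin (2 * m)) (Fin (2 * m)) ℝ → ENNReal) (hψm : Measurable ψ) (hψ : CInv ψ) :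
    (∫⁻ k, ψ ((k.1 * Dgen (2 * m + 1) (extN y) * k.1ᵀ).submatrix Fin.castSucc Fin.castSucc) ∂ν) =
      ∫⁻ x in boxB (Fin.cons 0 y), ψ (Dgen (2 * m) (extN x)) * ENNReal.ofReal
        (Real.Gamma (m + 1 / 2) / Real.sqrt Real.pi * 2 ^ m * (vdm fun i => x i ^ 2) /
          ((vdm fun i => y i ^ 2) * ∏ i, y i)) := by
  have hc := cons0_mono hy h0
  have h := step_gen ν hc (by simp) (extN y) (cO m)
    (fun r => by
      by_cases h : r.val < 2 * m
      · have h2 : r.val / 2 < m := by omega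
        have : cO m r = Fin.succ ⟨r.val / 2, h2⟩ := by simp [cO, h]
        rw [this, Fin.cons_succ, extN, dif_pos h2]
      · have h2 : ¬ r.val / 2 < m := by omega
        rw [cO, dif_neg h, Fin.cons_zero, extN, dif_neg h2])
    (Or.inl rfl) (fun h => by
      have : ¬ (2 * m + 1) / 2 < m := by omega
      rw [extN, dif_neg this]) (wO m) (wO_meas _) (wO_hw m) (1 / 2) (Real.pi ^ m) (by norm_num)
    (by
      intro F hF
      have := odd_law m (fun s => F s * ENNReal.ofReal (Real.exp (-∑ j, s j))) (by fun_prop)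
      have h2 : ∫⁻ u, F (wO m u) * gw u = ∫⁻ u, F (wO m u) * ENNReal.ofReal (Real.exp (-∑ j, wO m u j)) := by
        refine lintegral_congr fun u => ?_
        rw [gw_fib _ u (wO m u) (wO_hw m u)]
      rw [h2, this]
      congr 1
      refine setLIntegral_congr_fun (orth_meas _) fun s hs => ?_
      rw [mul_assoc, ← ENNReal.ofReal_mul (Real.exp_pos _).le, mul_comm (Real.exp _)]
      norm_num) ψ hψm hψ
  have e : Real.sqrt Real.pi ^ (2 * m + 1) = Real.pi ^ m * Real.sqrt Real.pi := by rw [pow_succ, sqrt_pi_pow]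
  have hp : 0 < Real.pi ^ m := by positivity
  have hs : 0 < Real.sqrt Real.pi := Real.sqrt_pos.mpr Real.pi_pos
  rw [e, ENNReal.ofReal_mul hp.le, mul_comm, mul_assoc] at h
  have h' := (ENNReal.mul_right_inj (by simpa using hp) ENNReal.ofReal_ne_top).mp h
  refine (ENNReal.mul_right_inj (a := ENNReal.ofReal (Real.sqrt Real.pi)) (by simpa using hs) ENNReal.ofReal_ne_top).mp ?_
  rw [h', ← lintegral_const_mul' _ _ ENNReal.ofReal_ne_top]
  refine setLIntegral_congr_fun (box_meas _) fun x hx => ?_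
  have hxp := box_pos hc (by simp) hx
  rw [mul_left_comm (ENNReal.ofReal _), ← ENNReal.ofReal_mul hs.le]
  congr 2
  have hv : vv (fun i => (Fin.cons 0 y : Fin (m + 1) → ℝ) i ^ 2) (fun i => x i ^ 2) 0 = ((∏ i, x i) / (∏ i, y i)) ^ 2 := by
    rw [vv, sg]
    simp only [Fin.cons_zero, Fin.zero_succAbove, Fin.cons_succ]
    rw [← Finset.prod_div_distrib, ← Finset.prod_div_distrib, ← Finset.prod_pow]
    refine Finset.prod_congr rfl fun i _ => ?_
    have := h0 i
    field_simp
    simp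
  have hX : 0 < ∏ i, x i := Finset.prod_pos fun i _ => hxp i
  have hY : 0 < ∏ i, y i := Finset.prod_pos fun i _ => h0 i
  have hvd : (vdm fun i => (Fin.cons 0 y : Fin (m + 1) → ℝ) i ^ 2) = (∏ i, y i) ^ 2 * vdm fun i => y i ^ 2 := by
    rw [vdm_succ, ← Finset.prod_pow]
    simp
  have hpw : (((∏ i, x i) / (∏ i, y i)) ^ 2) ^ ((1:ℝ) / 2 - 1) = (∏ i, y i) / ∏ i, x i := by
    have hq : 0 < (∏ i, x i) / (∏ i, y i) := by positivity
    rw [← Real.rpow_natCast, ← Real.rpow_mul hq.le]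
    norm_num
    rw [Real.rpow_neg_one, inv_div]
  have hvy : 0 < vdm fun i => y i ^ 2 := vdm_pos (by
    intro i j hij
    have := hy hij
    have := h0 i
    simp only
    nlinarith)
  rw [hv, hvd, hpw, Finset.prod_mul_distrib]
  simp only [Finset.prod_const, Finset.card_univ, Fintype.card_fin]
  field_simp

lemma og_right_inv {N : ℕ} (ν : Measure (OG N)) [ν.IsHaarMeasure] [IsProbabilityMeasure ν] : ν.IsMulRightInvariant := by
  refine ⟨fun g => ?_⟩
  have hp : IsProbabilityMeasure (ν.map (· * g)) := Measure.isProbabilityMeasure_map (measurable_mul_const g).aemeasurable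
  have h := Measure.isMulInvariant_eq_smul_of_compactSpace (ν.map (· * g)) ν
  have h1 : (ν.map (· * g)) Set.univ = (Measure.haarScalarFactor (ν.map (· * g)) ν • ν) Set.univ := by rw [← h]
  rw [Measure.smul_apply, measure_univ, measure_univ] at h1
  have h2 : Measure.haarScalarFactor (ν.map (· * g)) ν = 1 := by
    rw [ENNReal.smul_def, smul_eq_mul, mul_one] at h1
    exact_mod_cast h1.symm
  rw [h, h2, one_smul]

lemma og_exists_haar (N : ℕ) : ∃ ν : Measure (OG N), ν.IsHaarMeasure ∧ IsProbabilityMeasure ν :=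
  ⟨Measure.haarMeasure ⊤, inferInstance, ⟨by
    have := Measure.haarMeasure_self (G := OG N) (K₀ := ⊤)
    simpa using this⟩⟩

def embM {N : ℕ} (G : Matrix (Fin N) (Fin N) ℝ) : Matrix (Fin (N + 1)) (Fin (N + 1)) ℝ :=
  Matrix.of fun i j => Fin.lastCases (Fin.lastCases 1 (fun _ => 0) j) (fun i' => Fin.lastCases 0 (fun j' => G i' j') j) i

lemma embM_cc {N : ℕ} (G : Matrix (Fin N) (Fin N) ℝ) (i j : Fin N) : embM G i.castSucc j.castSucc = G i j := by simp [embM]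
lemma embM_cl {N : ℕ} (G : Matrix (Fin N) (Fin N) ℝ) (i : Fin N) : embM G i.castSucc (Fin.last N) = 0 := by simp [embM]
lemma embM_lc {N : ℕ} (G : Matrix (Fin N) (Fin N) ℝ) (i : Fin N) : embM G (Fin.last N) i.castSucc = 0 := by simp [embM]
lemma embM_ll {N : ℕ} (G : Matrix (Fin N) (Fin N) ℝ) : embM G (Fin.last N) (Fin.last N) = 1 := by simp [embM]

lemma embM_mem {N : ℕ} (k : OG N) : embM k.1 * (embM k.1)ᵀ = 1 := by
  ext i j
  rw [Matrix.mul_apply, Fin.sum_univ_castSucc]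
  simp only [Matrix.transpose_apply]
  induction i using Fin.lastCases with
  | last =>
    induction j using Fin.lastCases with
    | last => simp [embM_lc, embM_ll]
    | cast j => simp [embM_lc, embM_ll, embM_cl, Matrix.one_apply, Fin.ext_iff, j.isLt.ne']
  | cast i =>
    induction j using Fin.lastCases with
    | last => simp [embM_lc, embM_ll, embM_cl, Matrix.one_apply, Fin.ext_iff, i.isLt.ne]
    | cast j =>
      have := congrFun (congrFun (og_mul_transpose k) i) j
      rw [Matrix.mul_apply] at this
      simp only [Matrix.transpose_apply] at this
      simp [embM_cl, embM_cc, this, Matrix.one_apply]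

lemma embM_sub {N : ℕ} (k : OG N) (X : Matrix (Fin (N + 1)) (Fin (N + 1)) ℝ) :
    (embM k.1 * X * (embM k.1)ᵀ).submatrix Fin.castSucc Fin.castSucc =
      k.1 * X.submatrix Fin.castSucc Fin.castSucc * k.1ᵀ := by
  ext r s
  simp only [Matrix.submatrix_apply, Matrix.mul_apply, Fin.sum_univ_castSucc, embM_cl, embM_cc,
      Matrix.transpose_apply, mul_zero, add_zero, zero_mul]

def avgPsi {N : ℕ} (ν : Measure (OG (N + 1))) (φ : Matrix (Fin N) (Fin N) ℝ → ENNReal)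
    (A : Matrix (Fin (N + 1)) (Fin (N + 1)) ℝ) : ENNReal :=
  ∫⁻ k, φ ((k.1 * A * k.1ᵀ).submatrix Fin.castSucc Fin.castSucc) ∂ν

lemma conj_cont (N : ℕ) : Continuous fun p : Matrix (Fin (N + 1)) (Fin (N + 1)) ℝ × OG (N + 1) =>
    (p.2.1 * p.1 * p.2.1ᵀ).submatrix (Fin.castSucc : Fin N → _) Fin.castSucc := by
  have h : Continuous fun p : Matrix (Fin (N + 1)) (Fin (N + 1)) ℝ × OG (N + 1) => p.2.1 :=
    continuous_subtype_val.comp continuous_snd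
  exact ((h.mul continuous_fst).mul h.matrix_transpose).matrix_submatrix _ _

lemma conj_meas (N : ℕ) (D : Matrix (Fin (N + 1)) (Fin (N + 1)) ℝ) : Measurable fun k : OG (N + 1) =>
    (k.1 * D * k.1ᵀ).submatrix (Fin.castSucc : Fin N → _) Fin.castSucc := by
  have h : Continuous fun k : OG (N + 1) => k.1 := continuous_subtype_val
  exact (((h.mul continuous_const).mul h.matrix_transpose).matrix_submatrix _ _).measurable

lemma conj_m (N : ℕ) : Measurable fun p : Matrix (Fin (N + 1)) (Fin (N + 1)) ℝ × OG (N + 1) =>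
    (p.2.1 * p.1 * p.2.1ᵀ).submatrix (Fin.castSucc : Fin N → _) Fin.castSucc := (conj_cont N).measurable

lemma conj_meas2 {N : ℕ} {Ω : Type*} [MeasurableSpace Ω] (X : Ω → Matrix (Fin (N + 1)) (Fin (N + 1)) ℝ) (hX : Measurable X)
    (κ : Ω → OG (N + 1)) (hκ : Measurable κ) (φ : Matrix (Fin N) (Fin N) ℝ → ENNReal) (hφ : Measurable φ) :
    Measurable fun p => φ (((κ p).1 * X p * (κ p).1ᵀ).submatrix Fin.castSucc Fin.castSucc) := by
  have h1 : Measurable fun p => (X p, κ p) := hX.prodMk hκ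
  have h2 : Measurable fun p => ((κ p).1 * X p * (κ p).1ᵀ).submatrix (Fin.castSucc : Fin N → _) Fin.castSucc := 
    Measurable.comp (g := fun p : Matrix (Fin (N + 1)) (Fin (N + 1)) ℝ × OG (N + 1) =>
    (p.2.1 * p.1 * p.2.1ᵀ).submatrix (Fin.castSucc : Fin N → _) Fin.castSucc) (f := fun p => (X p, κ p)) (conj_m N) h1
  exact hφ.comp h2

lemma avgPsi_meas {N : ℕ} (ν : Measure (OG (N + 1))) [IsProbabilityMeasure ν]
    (φ : Matrix (Fin N) (Fin N) ℝ → ENNReal) (hφ : Measurable φ) :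
    Measurable (avgPsi ν φ) := by
  unfold avgPsi
  exact Measurable.lintegral_prod_right' (hφ.comp (conj_cont N).measurable)

lemma avgPsi_inv {N : ℕ} (ν : Measure (OG (N + 1))) [ν.IsMulRightInvariant]
    (φ : Matrix (Fin N) (Fin N) ℝ → ENNReal) : CInv (avgPsi ν φ) := by
  intro X _ g hg
  unfold avgPsi
  rw [← lintegral_mul_right_eq_self (fun k : OG (N + 1) => φ ((k.1 * X * k.1ᵀ).submatrix Fin.castSucc Fin.castSucc)) ⟨g, hg⟩]
  refine lintegral_congr fun k => ?_
  have : (k * ⟨g, hg⟩ : OG (N + 1)).1 = k.1 * g := rfl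
  rw [this, Matrix.transpose_mul]
  simp only [Matrix.mul_assoc]

lemma avg_eq {N : ℕ} (ν : Measure (OG (N + 1 + 1))) [ν.IsMulLeftInvariant] [IsProbabilityMeasure ν]
    (μ' : Measure (OG (N + 1))) [IsProbabilityMeasure μ']
    (D : Matrix (Fin (N + 1 + 1)) (Fin (N + 1 + 1)) ℝ)
    (φ : Matrix (Fin N) (Fin N) ℝ → ENNReal) (hφm : Measurable φ) :
    (∫⁻ k, φ (((k.1 * D * k.1ᵀ).submatrix Fin.castSucc Fin.castSucc).submatrix Fin.castSucc Fin.castSucc) ∂ν) =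
    ∫⁻ k : OG (N + 1 + 1), avgPsi μ' φ ((k.1 * D * k.1ᵀ).submatrix Fin.castSucc Fin.castSucc) ∂ν := by
  set f : OG (N + 1 + 1) → ENNReal := fun k =>
    φ (((k.1 * D * k.1ᵀ).submatrix Fin.castSucc Fin.castSucc).submatrix Fin.castSucc Fin.castSucc) with hf
  have e1 : ∀ k' : OG (N + 1), ∫⁻ k, f k ∂ν = ∫⁻ k : OG (N + 1 + 1),
      φ ((k'.1 * (k.1 * D * k.1ᵀ).submatrix Fin.castSucc Fin.castSucc * k'.1ᵀ).submatrix Fin.castSucc Fin.castSucc) ∂ν := by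
    intro k'
    rw [← lintegral_mul_left_eq_self f ⟨embM k'.1, og_mem (embM_mem k')⟩]
    refine lintegral_congr fun k => ?_
    have : ((⟨embM k'.1, og_mem (embM_mem k')⟩ : OG (N + 1 + 1)) * k).1 = embM k'.1 * k.1 := rfl
    rw [hf]
    simp only
    rw [this, Matrix.transpose_mul, ← embM_sub]
    simp only [Matrix.mul_assoc]
  have hm1 : Measurable fun k : OG (N + 1 + 1) => (k.1 * D * k.1ᵀ).submatrix (Fin.castSucc : Fin (N + 1) → _) Fin.castSucc :=
    conj_meas (N + 1) D
  unfold avgPsi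
  rw [lintegral_lintegral_swap]
  · simp_rw [← e1]
    simp
  · refine Measurable.aemeasurable ?_
    exact conj_meas2 (fun p : OG (N + 1 + 1) × OG (N + 1) => (p.1.1 * D * p.1.1ᵀ).submatrix Fin.castSucc Fin.castSucc)
      (hm1.comp (g := fun k : OG (N + 1 + 1) => (k.1 * D * k.1ᵀ).submatrix (Fin.castSucc : Fin (N + 1) → _) Fin.castSucc)
        measurable_fst) (fun p => p.2) measurable_snd φ hφm

lemma two_step {m : ℕ} (ν : Measure (OG (2 * m + 1 + 1))) [ν.IsHaarMeasure] [IsProbabilityMeasure ν]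
    {a : Fin (m + 1) → ℝ} (ha : StrictMono a) (h0 : 0 < a 0)
    (φ : Matrix (Fin (2 * m)) (Fin (2 * m)) ℝ → ENNReal) (hφm : Measurable φ) (hφ : CInv φ) :
    (∫⁻ k, φ (((k.1 * Dgen (2 * m + 1 + 1) (extN a) * k.1ᵀ).submatrix Fin.castSucc Fin.castSucc).submatrix Fin.castSucc Fin.castSucc) ∂ν) =
      ∫⁻ y in boxB a, (∫⁻ x in boxB (Fin.cons 0 y), φ (Dgen (2 * m) (extN x)) * ENNReal.ofReal
        (Real.Gamma (m + 1 / 2) / Real.sqrt Real.pi * 2 ^ m * (vdm fun i => x i ^ 2) /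
          ((vdm fun i => y i ^ 2) * ∏ i, y i))) * ENNReal.ofReal ((m.factorial : ℝ) *
        (((vdm fun i => y i ^ 2) / (vdm fun i => a i ^ 2)) * ∏ i, (2 * y i))) := by
  obtain ⟨μ', hμ', hμ1⟩ := og_exists_haar (2 * m + 1)
  have hr := og_right_inv μ'
  rw [avg_eq ν μ' _ φ hφm, step_even ν ha h0 _ (avgPsi_meas μ' φ hφm) (avgPsi_inv μ' φ)]
  refine setLIntegral_congr_fun (box_meas a) fun y hy => ?_
  rw [avgPsi, step_odd μ' (box_mono ha hy) (box_pos ha h0.le hy) φ hφm hφ]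

def MM {m : ℕ} (x : Fin m → ℝ) (a : Fin (m + 1) → ℝ) : Matrix (Fin (m + 1)) (Fin (m + 1)) ℝ :=
  Matrix.of fun b c => (Fin.cons 1 (fun j => max 0 (a c - x j)) : Fin (m + 1) → ℝ) b

def gg {m : ℕ} (x : Fin m → ℝ) (a : Fin (m + 1) → ℝ) : Matrix (Fin m) (Fin m) ℝ :=
  Matrix.of fun j k => max 0 (a k.succ - x j) - max 0 (a k.castSucc - x j)

lemma MM_det {m : ℕ} (x : Fin m → ℝ) (a : Fin (m + 1) → ℝ) : (MM x a).det = (gg x a).det := by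
  set B : Matrix (Fin (m + 1)) (Fin (m + 1)) ℝ := Matrix.of fun i j =>
    (Fin.cons (MM x a i 0) (fun k => MM x a i k.succ - MM x a i k.castSucc) : Fin (m + 1) → ℝ) j with hB
  have h1 : (MM x a).det = B.det := by
    refine Matrix.det_eq_of_forall_col_eq_smul_add_pred (fun _ => 1) ?_ ?_
    · intro i; simp [hB]
    · intro i j; simp [hB]
  rw [h1, Matrix.det_succ_row_zero, Fin.sum_univ_succ]
  have h2 : ∀ j : Fin m, B 0 j.succ = 0 := by intro j; simp [hB, MM]
  have h3 : B 0 0 = 1 := by simp [hB, MM]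
  simp only [h2, h3, mul_zero, zero_mul, Finset.sum_const_zero, add_zero, Fin.val_zero, pow_zero, one_mul]
  rfl

def UU {m : ℕ} (x : Fin m → ℝ) (a : Fin (m + 1) → ℝ) (j : Fin m) : ℝ :=
  if h : j.val + 1 < m then x ⟨j.val + 1, h⟩ else a (Fin.last m)

def LL {m : ℕ} (x : Fin m → ℝ) (a : Fin (m + 1) → ℝ) : Matrix (Fin m) (Fin m) ℝ :=
  Matrix.of fun j k => max 0 (min (a k.succ) (UU x a j) - max (a k.castSucc) (x j))

lemma over1 {a a' x : ℝ} (h : a ≤ a') : max 0 (a' - x) - max 0 (a - x) = max 0 (a' - max a x) := by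
  simp only [max_def]; split_ifs <;> linarith

lemma over2 {a a' x x' : ℝ} (h : a ≤ a') (h' : x ≤ x') :
    max 0 (a' - x) - max 0 (a - x) = max 0 (min a' x' - max a x) + (max 0 (a' - x') - max 0 (a - x')) := by
  simp only [max_def, min_def]; split_ifs <;> linarith

lemma gg_det {m : ℕ} {x : Fin m → ℝ} {a : Fin (m + 1) → ℝ} (hx : Monotone x) (ha : Monotone a) :
    (gg x a).det = (LL x a).det := by
  cases m with
  | zero => simp
  | succ m =>
    rw [← Matrix.det_submatrix_equiv_self Fin.revPerm (gg x a), ← Matrix.det_submatrix_equiv_self Fin.revPerm (LL x a)]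
    refine Matrix.det_eq_of_forall_row_eq_smul_add_pred (fun _ => 1) ?_ ?_
    · intro j
      simp only [Matrix.submatrix_apply, Fin.revPerm_apply, gg, LL, Matrix.of_apply, UU]
      rw [dif_neg (by simp), over1 (ha (Fin.castSucc_lt_succ).le), min_eq_left (ha (Fin.le_last _))]
    · intro i j
      simp only [Matrix.submatrix_apply, Fin.revPerm_apply, gg, LL, Matrix.of_apply, UU, one_mul]
      have h1 : (i.succ.rev).val + 1 < m + 1 := by
        have := i.isLt
        rw [Fin.val_rev, Fin.val_succ]; omega
      have h2 : (⟨(i.succ.rev).val + 1, h1⟩ : Fin (m + 1)) = i.castSucc.rev := by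
        have := i.isLt
        ext; simp only [Fin.val_rev, Fin.val_succ, Fin.val_castSucc]; omega
      rw [dif_pos h1, h2]
      refine over2 (ha (Fin.castSucc_lt_succ).le) (hx ?_)
      rw [Fin.rev_le_rev]
      exact (Fin.castSucc_lt_succ).le

lemma LL_nonneg {m : ℕ} (x : Fin m → ℝ) (a : Fin (m + 1) → ℝ) (i j : Fin m) : 0 ≤ LL x a i j := le_max_left _ _

lemma UU_le {m : ℕ} {x : Fin m → ℝ} (hx : Monotone x) (a : Fin (m + 1) → ℝ) {i j : Fin m} (h : i < j) :
    UU x a i ≤ x j := by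
  have : i.val + 1 < m := by have := j.isLt; have : i.val < j.val := h; omega
  rw [UU, dif_pos this]
  exact hx (by rw [Fin.le_def]; exact h)

lemma LL_pos {m : ℕ} {x : Fin m → ℝ} {a : Fin (m + 1) → ℝ} {i j : Fin m} (h : LL x a i j ≠ 0) :
    max (a j.castSucc) (x i) < min (a j.succ) (UU x a i) := by
  by_contra h'
  exact h (max_eq_left (by linarith))

lemma LL_det {m : ℕ} {x : Fin m → ℝ} {a : Fin (m + 1) → ℝ} (hx : Monotone x) (ha : Monotone a) :
    (LL x a).det = ∏ j, LL x a j j := by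
  rw [Matrix.det_apply]
  rw [Finset.sum_eq_single 1]
  · simp
  · intro σ _ hσ
    have : ∃ i j : Fin m, i < j ∧ σ j < σ i := by
      by_contra hc
      push Not at hc
      apply hσ
      have hm : StrictMono σ := fun i j h => lt_of_le_of_ne (hc i j h) (fun h' => h.ne (σ.injective h'))
      ext i
      have : σ = Equiv.refl _ := by
        have := Subsingleton.elim (StrictMono.orderIsoOfSurjective σ hm σ.surjective) (OrderIso.refl _)
        ext i
        exact congrArg Fin.val (DFunLike.congr_fun this i)
      rw [this]; rfl
    obtain ⟨i, j, hij, hs⟩ := this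
    have : ∏ l, LL x a (σ l) l = 0 := by
      by_contra hne
      rw [← Ne, Finset.prod_ne_zero_iff] at hne
      have h1 := LL_pos (hne i (Finset.mem_univ _))
      have h2 := LL_pos (hne j (Finset.mem_univ _))
      rw [max_lt_iff, lt_min_iff, lt_min_iff] at h1 h2
      have h3 := UU_le hx a hs
      have h4 : a i.succ ≤ a j.castSucc := ha (by rw [Fin.le_def]; simp; omega)
      linarith [h1.1.1, h1.1.2, h1.2.1, h1.2.2, h2.1.1, h2.1.2, h2.2.1, h2.2.2]
    rw [this, smul_zero]
  · intro h; exact absurd (Finset.mem_univ _) h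

lemma MM_nonneg {m : ℕ} {x : Fin m → ℝ} {a : Fin (m + 1) → ℝ} (hx : Monotone x) (ha : Monotone a) : 0 ≤ (MM x a).det := by
  rw [MM_det, gg_det hx ha, LL_det hx ha]
  exact Finset.prod_nonneg fun i _ => LL_nonneg _ _ _ _

lemma MM_vol {m : ℕ} {x : Fin m → ℝ} {a : Fin (m + 1) → ℝ} (hx : StrictMono x) (hx0 : ∀ i, 0 < x i) (ha : StrictMono a) :
    volume {y : Fin m → ℝ | y ∈ boxB a ∧ x ∈ boxB (Fin.cons 0 y)} = ENNReal.ofReal (MM x a).det := by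
  rw [MM_det, gg_det hx.monotone ha.monotone, LL_det hx.monotone ha.monotone, ENNReal.ofReal_prod_of_nonneg (fun i _ => LL_nonneg _ _ _ _)]
  have hs : {y : Fin m → ℝ | y ∈ boxB a ∧ x ∈ boxB (Fin.cons 0 y)} = Set.univ.pi fun i =>
      Set.Ioo (max (a i.castSucc) (x i)) (min (a i.succ) (UU x a i)) := by
    ext y
    simp only [Set.mem_setOf_eq, boxB, Set.mem_pi, Set.mem_univ, true_implies, Set.mem_Ioo, max_lt_iff, lt_min_iff]
    constructor
    · rintro ⟨h1, h2⟩ i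
      refine ⟨⟨(h1 i).1, by simpa using (h2 i).2⟩, (h1 i).2, ?_⟩
      rw [UU]
      split_ifs with h
      · have := (h2 ⟨i.val + 1, h⟩).1
        have e : (⟨i.val + 1, h⟩ : Fin m).castSucc = i.succ := rfl
        rw [e, Fin.cons_succ] at this
        exact this
      · exact lt_of_lt_of_le (h1 i).2 (ha.monotone (Fin.le_last _))
    · intro h
      refine ⟨fun i => ⟨(h i).1.1, (h i).2.1⟩, fun i => ⟨?_, by simpa using (h i).1.2⟩⟩
      by_cases hi : i.val = 0
      · have e : i.castSucc = 0 := by ext; simpa using hi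
        rw [e, Fin.cons_zero]; exact hx0 i
      · have hl := i.isLt
        have e : i.castSucc = Fin.succ ⟨i.val - 1, by omega⟩ := by ext; simp; omega
        rw [e, Fin.cons_succ]
        have := (h ⟨i.val - 1, by omega⟩).2.2
        have h5 : i.val - 1 + 1 < m := by omega
        rw [UU, dif_pos h5] at this
        have h6 : (⟨i.val - 1 + 1, h5⟩ : Fin m) = i := by ext; simp; omega
        rw [h6] at this
        exact this
  rw [hs, Real.volume_pi_Ioo]
  refine Finset.prod_congr rfl fun i _ => ?_
  simp only [LL, Matrix.of_apply]
  rw [ENNReal.ofReal_max]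
  simp

lemma const_eq (m : ℕ) : (m.factorial : ℝ) * 4 ^ m * (Real.Gamma (m + 1 / 2) / Real.sqrt Real.pi) = ((2 * m).factorial : ℝ) := by
  have hs : Real.sqrt Real.pi ≠ 0 := (Real.sqrt_pos.mpr Real.pi_pos).ne'
  induction m with
  | zero => simp [← one_div, Real.Gamma_one_half_eq, hs]
  | succ m ih =>
    have h1 : ((m + 1 : ℕ) : ℝ) + 1 / 2 = (m + 1 / 2) + 1 := by push_cast; ring
    have e : 2 * (m + 1) = 2 * m + 1 + 1 := by ring
    rw [h1, Real.Gamma_add_one (by positivity), e, Nat.factorial_succ (2 * m + 1), Nat.factorial_succ (2 * m), Nat.factorial_succ m]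
    push_cast
    rw [← ih, pow_succ]
    ring

def SS (m : ℕ) : Set (Fin m → ℝ) := {x | StrictMono x ∧ ∀ i, 0 < x i}

lemma sm_meas (m : ℕ) : MeasurableSet {x : Fin m → ℝ | StrictMono x} := by
  have : {x : Fin m → ℝ | StrictMono x} = ⋂ i, ⋂ j, ⋂ (_ : i < j), {x | x i < x j} := by
    ext x
    simp only [Set.mem_setOf_eq, Set.mem_iInter]
    exact ⟨fun h i j hij => h hij, fun h i j hij => h i j hij⟩
  rw [this]
  refine MeasurableSet.iInter fun i => MeasurableSet.iInter fun j => MeasurableSet.iInter fun _ => ?_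
  exact measurableSet_lt (measurable_pi_apply i) (measurable_pi_apply j)

lemma SS_meas (m : ℕ) : MeasurableSet (SS m) := (sm_meas m).inter (orth_meas m)

lemma vdm_meas {m : ℕ} : Measurable fun x : Fin m → ℝ => vdm fun i => x i ^ 2 := by
  unfold vdm
  fun_prop

lemma MM_meas {m : ℕ} (a : Fin (m + 1) → ℝ) : Measurable fun x : Fin m → ℝ => (MM x a).det := by
  simp only [Matrix.det_apply]
  refine Finset.measurable_fun_sum _ fun σ _ => Measurable.const_smul (Finset.measurable_fun_prod _ fun i _ => ?_) _
  simp only [MM, Matrix.of_apply]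
  refine Fin.cases ?_ (fun j => ?_) (σ i)
  · simp
  · simp only [Fin.cons_succ]
    fun_prop

lemma pairs_meas (m : ℕ) : MeasurableSet {p : (Fin m → ℝ) × (Fin m → ℝ) | p.2 ∈ boxB (Fin.cons 0 p.1)} := by
  have : {p : (Fin m → ℝ) × (Fin m → ℝ) | p.2 ∈ boxB (Fin.cons 0 p.1)} =
      ⋂ i : Fin m, ({p | (Fin.cons 0 p.1 : Fin (m + 1) → ℝ) i.castSucc < p.2 i} ∩ {p | p.2 i < p.1 i}) := by
    ext p; simp [boxB]
  rw [this]
  have hc : Measurable fun p : (Fin m → ℝ) × (Fin m → ℝ) => (Fin.cons 0 p.1 : Fin (m + 1) → ℝ) :=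
    cons_meas.comp (measurable_const.prodMk measurable_fst)
  refine MeasurableSet.iInter fun i => MeasurableSet.inter ?_ ?_
  · exact measurableSet_lt ((measurable_pi_apply _).comp hc) (by fun_prop)
  · exact measurableSet_lt (by fun_prop) (by fun_prop)

lemma tonelli_box {m : ℕ} {a : Fin (m + 1) → ℝ} (ha : StrictMono a) (h0 : 0 < a 0) (F : (Fin m → ℝ) → ENNReal) (hF : Measurable F) :
    ∫⁻ y in boxB a, ∫⁻ x in boxB (Fin.cons 0 y), F x = ∫⁻ x in SS m, F x * ENNReal.ofReal (MM x a).det := by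
  have e1 : ∀ y : Fin m → ℝ, ∫⁻ x in boxB (Fin.cons 0 y), F x =
      ∫⁻ x, {p : (Fin m → ℝ) × (Fin m → ℝ) | p.2 ∈ boxB (Fin.cons 0 p.1)}.indicator (fun p => F p.2) (y, x) := by
    intro y
    rw [← lintegral_indicator (box_meas _)]
    rfl
  simp_rw [e1]
  rw [lintegral_lintegral_swap]
  swap
  · exact ((hF.comp measurable_snd).indicator (pairs_meas m)).aemeasurable
  rw [← lintegral_indicator (SS_meas m)]
  refine lintegral_congr fun x => ?_
  have hm : MeasurableSet {y : Fin m → ℝ | x ∈ boxB (Fin.cons 0 y)} :=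
    (pairs_meas m).preimage (measurable_id.prodMk measurable_const)
  have e2 : ∫⁻ y in boxB a, {p : (Fin m → ℝ) × (Fin m → ℝ) | p.2 ∈ boxB (Fin.cons 0 p.1)}.indicator (fun p => F p.2) (y, x) =
      F x * volume {y : Fin m → ℝ | y ∈ boxB a ∧ x ∈ boxB (Fin.cons 0 y)} := by
    have : ∀ y, {p : (Fin m → ℝ) × (Fin m → ℝ) | p.2 ∈ boxB (Fin.cons 0 p.1)}.indicator (fun p => F p.2) (y, x) =
        {y : Fin m → ℝ | x ∈ boxB (Fin.cons 0 y)}.indicator (fun _ => F x) y := fun y => rfl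
    simp_rw [this]
    rw [lintegral_indicator hm, lintegral_const, Measure.restrict_apply_univ, Measure.restrict_apply hm]
    congr 2
    ext y
    exact and_comm
  rw [e2]
  by_cases hx : x ∈ SS m
  · rw [Set.indicator_of_mem hx, MM_vol hx.1 hx.2 ha]
  · rw [Set.indicator_of_notMem hx]
    have : {y : Fin m → ℝ | y ∈ boxB a ∧ x ∈ boxB (Fin.cons 0 y)} = ∅ := by
      ext y
      simp only [Set.mem_setOf_eq, Set.mem_empty_iff_false, iff_false, not_and]
      intro hy hxy
      have hc := cons0_mono (box_mono ha hy) (box_pos ha h0.le hy)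
      exact hx ⟨box_mono hc hxy, box_pos hc (by simp) hxy⟩
    rw [this, measure_empty, mul_zero]

lemma sqv_pos {m : ℕ} {y : Fin m → ℝ} (hy : StrictMono y) (h0 : ∀ i, 0 < y i) : 0 < vdm fun i => y i ^ 2 :=
  vdm_pos (by
    intro i j hij
    have := hy hij
    have := h0 i
    simp only
    nlinarith)

lemma pos_of_sm {m : ℕ} {a : Fin (m + 1) → ℝ} (ha : StrictMono a) (h0 : 0 < a 0) (i) : 0 < a i :=
  lt_of_lt_of_le h0 (ha.monotone (Fin.zero_le i))

lemma sorted_law {m : ℕ} (ν : Measure (OG (2 * m + 1 + 1))) [ν.IsHaarMeasure] [IsProbabilityMeasure ν]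
    {a : Fin (m + 1) → ℝ} (ha : StrictMono a) (h0 : 0 < a 0)
    (φ : Matrix (Fin (2 * m)) (Fin (2 * m)) ℝ → ENNReal) (hφm : Measurable φ) (hφ : CInv φ) :
    (∫⁻ k, φ (((k.1 * Dgen (2 * m + 1 + 1) (extN a) * k.1ᵀ).submatrix Fin.castSucc Fin.castSucc).submatrix Fin.castSucc Fin.castSucc) ∂ν) =
      ∫⁻ x in SS m, φ (Dgen (2 * m) (extN x)) * ENNReal.ofReal
        (((2 * m).factorial : ℝ) * ((vdm fun i => x i ^ 2) / (vdm fun i => a i ^ 2)) * (MM x a).det) := by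
  rw [two_step ν ha h0 φ hφm hφ]
  have hva := sqv_pos ha (pos_of_sm ha h0)
  have e : ∀ y ∈ boxB a, (∫⁻ x in boxB (Fin.cons 0 y), φ (Dgen (2 * m) (extN x)) * ENNReal.ofReal
        (Real.Gamma (m + 1 / 2) / Real.sqrt Real.pi * 2 ^ m * (vdm fun i => x i ^ 2) /
          ((vdm fun i => y i ^ 2) * ∏ i, y i))) * ENNReal.ofReal ((m.factorial : ℝ) *
        (((vdm fun i => y i ^ 2) / (vdm fun i => a i ^ 2)) * ∏ i, (2 * y i))) =
      ∫⁻ x in boxB (Fin.cons 0 y), φ (Dgen (2 * m) (extN x)) * ENNReal.ofReal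
        (((2 * m).factorial : ℝ) * ((vdm fun i => x i ^ 2) / (vdm fun i => a i ^ 2))) := by
    intro y hy
    have hyp := box_pos ha h0.le hy
    have hym := box_mono ha hy
    have hvy := sqv_pos hym hyp
    have hc := cons0_mono hym hyp
    have hY : 0 < ∏ i, y i := Finset.prod_pos fun i _ => hyp i
    rw [← lintegral_mul_const' _ _ ENNReal.ofReal_ne_top]
    refine setLIntegral_congr_fun (box_meas _) fun x hx => ?_
    have hvx := sqv_pos (box_mono hc hx) (box_pos hc (by simp) hx)
    have hG : 0 < Real.Gamma ((m : ℝ) + 1 / 2) := Real.Gamma_pos_of_pos (by positivity)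
    have hs : 0 < Real.sqrt Real.pi := Real.sqrt_pos.mpr Real.pi_pos
    rw [mul_assoc, ← ENNReal.ofReal_mul (by positivity)]
    congr 2
    rw [← const_eq, Finset.prod_mul_distrib]
    simp only [Finset.prod_const, Finset.card_univ, Fintype.card_fin]
    have h4 : (4 : ℝ) ^ m = 2 ^ m * 2 ^ m := by rw [← mul_pow]; norm_num
    rw [h4]
    field_simp
  rw [setLIntegral_congr_fun (box_meas a) e, tonelli_box ha h0 _ (by
    refine (hφm.comp (Dgen_ext_meas _ _)).mul (Measurable.ennreal_ofReal ?_)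
    exact ((vdm_meas).div_const _).const_mul _)]
  refine setLIntegral_congr_fun (SS_meas m) fun x hx => ?_
  have hvx := sqv_pos hx.1 hx.2
  rw [mul_assoc, ← ENNReal.ofReal_mul (by positivity)]

lemma perm_conj {N : ℕ} (τ : Equiv.Perm (Fin N)) (A : Matrix (Fin N) (Fin N) ℝ) :
    ((1 : Matrix (Fin N) (Fin N) ℝ).submatrix τ id) * A * ((1 : Matrix (Fin N) (Fin N) ℝ).submatrix τ id)ᵀ = A.submatrix τ τ := by
  ext i j
  simp [Matrix.mul_apply, Matrix.one_apply]

lemma perm_og {N : ℕ} (τ : Equiv.Perm (Fin N)) :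
    ((1 : Matrix (Fin N) (Fin N) ℝ).submatrix τ id) ∈ Matrix.orthogonalGroup (Fin N) ℝ := by
  apply og_mem
  have := perm_conj τ (1 : Matrix (Fin N) (Fin N) ℝ)
  rw [Matrix.mul_one] at this
  rw [this]
  exact Matrix.submatrix_one_equiv τ

def dbl {m : ℕ} (σ : Equiv.Perm (Fin m)) : Equiv.Perm (Fin (2 * m)) where
  toFun i := ⟨2 * (σ ⟨i.val / 2, by have := i.isLt; omega⟩).val + i.val % 2, by
    have := (σ ⟨i.val / 2, by have := i.isLt; omega⟩).isLt; omega⟩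
  invFun i := ⟨2 * (σ.symm ⟨i.val / 2, by have := i.isLt; omega⟩).val + i.val % 2, by
    have := (σ.symm ⟨i.val / 2, by have := i.isLt; omega⟩).isLt; omega⟩
  left_inv i := by
    ext
    have h : ∀ k r : ℕ, (2 * k + r % 2) / 2 = k := fun k r => by omega
    have h' : ∀ k r : ℕ, (2 * k + r % 2) % 2 = r % 2 := fun k r => by omega
    simp only [h, h', Fin.eta, Equiv.symm_apply_apply]
    omega
  right_inv i := by
    ext
    have h : ∀ k r : ℕ, (2 * k + r % 2) / 2 = k := fun k r => by omega
    have h' : ∀ k r : ℕ, (2 * k + r % 2) % 2 = r % 2 := fun k r => by omega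
    simp only [h, h', Fin.eta, Equiv.apply_symm_apply]
    omega

lemma Dgen_perm {m : ℕ} (σ : Equiv.Perm (Fin m)) (x : Fin m → ℝ) :
    Dgen (2 * m) (extN (x ∘ σ)) = (Dgen (2 * m) (extN x)).submatrix (dbl σ) (dbl σ) := by
  ext i j
  have h : ∀ k r : ℕ, (2 * k + r % 2) / 2 = k := fun k r => by omega
  have h' : ∀ k r : ℕ, (2 * k + r % 2) % 2 = r % 2 := fun k r => by omega
  have hi : i.val / 2 < m := by have := i.isLt; omega
  have hj : j.val / 2 < m := by have := j.isLt; omega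
  have hd : ∀ i : Fin (2 * m), (dbl σ i).val = 2 * (σ ⟨i.val / 2, by have := i.isLt; omega⟩).val + i.val % 2 := fun _ => rfl
  simp only [Dgen, Matrix.of_apply, Matrix.submatrix_apply, hd, h, h']
  have he : (σ ⟨i.val / 2, hi⟩).val = (σ ⟨j.val / 2, hj⟩).val ↔ i.val / 2 = j.val / 2 := by
    rw [← Fin.ext_iff, σ.injective.eq_iff, Fin.mk.injEq]
  simp only [he, extN_lt]
  congr 2
  rw [extN, dif_pos hi]
  rfl

lemma Dgen_perm_conj {m : ℕ} (σ : Equiv.Perm (Fin m)) (x : Fin m → ℝ) : ∃ g ∈ Matrix.orthogonalGroup (Fin (2 * m)) ℝ,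
    Dgen (2 * m) (extN (x ∘ σ)) = g * Dgen (2 * m) (extN x) * gᵀ :=
  ⟨_, perm_og (dbl σ), by rw [perm_conj, Dgen_perm]⟩

lemma vdm_perm {m : ℕ} (σ : Equiv.Perm (Fin m)) (x : Fin m → ℝ) : (vdm fun i => x (σ i)) = (Equiv.Perm.sign σ : ℝ) * vdm x := by
  rw [vdm_det, vdm_det, ← Matrix.det_permute]
  rfl

lemma MM_perm_x {m : ℕ} (σ : Equiv.Perm (Fin m)) (x : Fin m → ℝ) (a : Fin (m + 1) → ℝ) :
    (MM (x ∘ σ) a).det = (Equiv.Perm.sign σ : ℝ) * (MM x a).det := by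
  rw [MM_det, MM_det, ← Matrix.det_permute]
  rfl

lemma MM_perm_a {m : ℕ} (σ : Equiv.Perm (Fin (m + 1))) (x : Fin m → ℝ) (a : Fin (m + 1) → ℝ) :
    (MM x (a ∘ σ)).det = (Equiv.Perm.sign σ : ℝ) * (MM x a).det := by
  rw [← Matrix.det_permute']
  rfl

lemma sign_sq {m : ℕ} (σ : Equiv.Perm (Fin m)) : ((Equiv.Perm.sign σ : ℤ) : ℝ) * ((Equiv.Perm.sign σ : ℤ) : ℝ) = 1 := by
  rcases Int.units_eq_one_or (Equiv.Perm.sign σ) with h | h <;> simp [h]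

def dens {m : ℕ} (C : ℝ) (x : Fin m → ℝ) (a : Fin (m + 1) → ℝ) : ℝ :=
  C * ((vdm fun i => x i ^ 2) / (vdm fun i => a i ^ 2)) * (MM x a).det

lemma dens_perm_x {m : ℕ} (C : ℝ) (σ : Equiv.Perm (Fin m)) (x : Fin m → ℝ) (a : Fin (m + 1) → ℝ) :
    dens C (x ∘ σ) a = dens C x a := by
  have h := sign_sq σ
  rw [dens, dens, MM_perm_x]
  have := vdm_perm σ (fun i => x i ^ 2)
  simp only [Function.comp] at this ⊢
  rw [this]
  linear_combination (C * ((vdm fun i => x i ^ 2) / (vdm fun i => a i ^ 2)) * (MM x a).det) * h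

lemma dens_perm_a {m : ℕ} (C : ℝ) (σ : Equiv.Perm (Fin (m + 1))) (x : Fin m → ℝ) (a : Fin (m + 1) → ℝ) :
    dens C x (a ∘ σ) = dens C x a := by
  have h := sign_sq σ
  rw [dens, dens, MM_perm_a]
  have := vdm_perm σ (fun i => a i ^ 2)
  simp only [Function.comp] at this ⊢
  rw [this]
  rcases Int.units_eq_one_or (Equiv.Perm.sign σ) with h | h <;> simp [h, div_neg]

lemma dens_meas {m : ℕ} (C : ℝ) (a : Fin (m + 1) → ℝ) : Measurable fun x : Fin m → ℝ => dens C x a :=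
  ((vdm_meas.div_const _).const_mul _).mul (MM_meas a)

lemma ae_inj (m : ℕ) : ∀ᵐ x : Fin m → ℝ, Function.Injective x := by
  have : ∀ i j : Fin m, i ≠ j → ∀ᵐ x : Fin m → ℝ, x i ≠ x j := by
    intro i j hij
    have h := Measure.addHaar_submodule (volume : Measure (Fin m → ℝ))
      (LinearMap.ker (LinearMap.proj (R := ℝ) (φ := fun _ : Fin m => ℝ) i - LinearMap.proj j)) (by
        intro h
        have h1 : (Pi.single i 1 : Fin m → ℝ) ∈ LinearMap.ker (LinearMap.proj (R := ℝ) (φ := fun _ : Fin m => ℝ) i - LinearMap.proj j) := by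
          rw [h]; trivial
        simp [hij] at h1)
    rw [ae_iff]
    convert h using 2
    ext x
    simp [sub_eq_zero]
  simp only [← ae_all_iff] at this
  filter_upwards [this] with x hx i j h
  by_contra hij
  exact hx i j hij h

lemma sym_law {m : ℕ} (h : (Fin m → ℝ) → ENNReal) (hm : Measurable h) (hs : ∀ σ : Equiv.Perm (Fin m), ∀ x, h (x ∘ σ) = h x) :
    ∫⁻ x in orth m, h x = (m.factorial : ENNReal) * ∫⁻ x in SS m, h x := by
  have e1 : ∀ᵐ x : Fin m → ℝ, (orth m).indicator h x = ∑ σ : Equiv.Perm (Fin m), (SS m).indicator h (x ∘ σ) := by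
    filter_upwards [ae_inj m] with x hx
    by_cases hxo : x ∈ orth m
    · rw [Set.indicator_of_mem hxo, Finset.sum_eq_single (Tuple.sort x)]
      · have hmn := Tuple.monotone_sort x
        rw [Set.indicator_of_mem, hs]
        exact ⟨hmn.strictMono_of_injective (hx.comp (Equiv.injective _)), fun i => hxo _⟩
      · intro τ _ hτ
        apply Set.indicator_of_notMem
        intro hmem
        have := Tuple.unique_monotone hmem.1.monotone (Tuple.monotone_sort x)
        apply hτ
        ext i
        exact congrArg Fin.val (hx (congrFun this i))
      · intro hh; exact absurd (Finset.mem_univ _) hh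
    · rw [Set.indicator_of_notMem hxo]
      symm
      refine Finset.sum_eq_zero fun σ _ => Set.indicator_of_notMem ?_ _
      intro hmem
      apply hxo
      intro i
      simpa using hmem.2 (σ.symm i)
  have e2 : ∀ σ : Equiv.Perm (Fin m), ∫⁻ x : Fin m → ℝ, (SS m).indicator h (x ∘ σ) = ∫⁻ x, (SS m).indicator h x := by
    intro σ
    have := (volume_measurePreserving_piCongrLeft (fun _ : Fin m => ℝ) σ.symm).lintegral_comp_emb
      (MeasurableEquiv.measurableEmbedding _) ((SS m).indicator h)
    rw [← this]
    refine lintegral_congr fun x => ?_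
    congr 1
    ext i
    have := MeasurableEquiv.piCongrLeft_apply_apply (β := fun _ : Fin m => ℝ) σ.symm x (σ i)
    rw [Equiv.symm_apply_apply] at this
    exact this.symm
  have hI : Measurable ((SS m).indicator h) := hm.indicator (SS_meas m)
  rw [← lintegral_indicator (orth_meas m), lintegral_congr_ae e1, lintegral_finsetSum _ (fun σ _ => ?_)]
  · simp_rw [e2]
    rw [Finset.sum_const, Finset.card_univ, Fintype.card_perm, Fintype.card_fin, nsmul_eq_mul, lintegral_indicator (SS_meas m)]
  · exact hI.comp (measurable_pi_lambda _ fun i => measurable_pi_apply _)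

lemma vdm_sq_nonneg {m : ℕ} {x : Fin m → ℝ} (hx : Monotone x) (h0 : ∀ i, 0 < x i) : 0 ≤ vdm fun i => x i ^ 2 := by
  refine Finset.prod_nonneg fun p hp => ?_
  have h := (Finset.mem_filter.mp hp).2
  have h1 := hx h.le
  have h2 := h0 p.1
  exact sub_nonneg.mpr (pow_le_pow_left₀ h2.le h1 2)

lemma dens_nonneg {m : ℕ} {C : ℝ} (hC : 0 ≤ C) {x : Fin m → ℝ} {a : Fin (m + 1) → ℝ} (hx : ∀ i, 0 < x i) (ha : ∀ i, 0 < a i) :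
    0 ≤ dens C x a := by
  rw [← dens_perm_x C (Tuple.sort x), ← dens_perm_a C (Tuple.sort a)]
  have h1 := Tuple.monotone_sort x
  have h2 := Tuple.monotone_sort a
  have e1 := vdm_sq_nonneg h1 (fun i => hx _)
  have e2 := vdm_sq_nonneg h2 (fun i => ha _)
  have e3 := MM_nonneg h1 h2
  unfold dens
  exact mul_nonneg (mul_nonneg hC (div_nonneg e1 e2)) e3

lemma perm_haar {m : ℕ} (ν : Measure (OG (2 * m + 1 + 1))) [ν.IsHaarMeasure] [IsProbabilityMeasure ν]
    (a : Fin (m + 1) → ℝ) (σ : Equiv.Perm (Fin (m + 1))) 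
    (F : Matrix (Fin (2 * m + 1 + 1)) (Fin (2 * m + 1 + 1)) ℝ → ENNReal) :
    (∫⁻ k, F (k.1 * Dgen (2 * m + 1 + 1) (extN (a ∘ σ)) * k.1ᵀ) ∂ν) =
     ∫⁻ k, F (k.1 * Dgen (2 * m + 1 + 1) (extN a) * k.1ᵀ) ∂ν := by
  have := og_right_inv ν
  obtain ⟨g, hg, h⟩ := Dgen_perm_conj σ a
  have h' : Dgen (2 * m + 1 + 1) (extN (a ∘ σ)) = g * Dgen (2 * m + 1 + 1) (extN a) * gᵀ := h
  let g' : OG (2 * m + 1 + 1) := ⟨g, hg⟩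
  rw [← lintegral_mul_right_eq_self (μ := ν) (fun k : OG (2 * m + 1 + 1) => F (k.1 * Dgen (2 * m + 1 + 1) (extN a) * k.1ᵀ)) g']
  refine lintegral_congr fun k => ?_
  have e : (k * g').1 = k.1 * g := rfl
  rw [h', e, Matrix.transpose_mul]
  simp only [Matrix.mul_assoc]

lemma gen_law {m : ℕ} (ν : Measure (OG (2 * m + 1 + 1))) [ν.IsHaarMeasure] [IsProbabilityMeasure ν]
    {a : Fin (m + 1) → ℝ} (ha : Function.Injective a) (h0 : ∀ i, 0 < a i)
    (φ : Matrix (Fin (2 * m)) (Fin (2 * m)) ℝ → ENNReal) (hφm : Measurable φ) (hφ : CInv φ) :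
    (∫⁻ k, φ (((k.1 * Dgen (2 * m + 1 + 1) (extN a) * k.1ᵀ).submatrix Fin.castSucc Fin.castSucc).submatrix Fin.castSucc Fin.castSucc) ∂ν) =
      ∫⁻ x in orth m, φ (Dgen (2 * m) (extN x)) * ENNReal.ofReal
        (dens (((2 * m).factorial : ℝ) / (m.factorial : ℝ)) x a) := by
  have hs : StrictMono (a ∘ Tuple.sort a) :=
    (Tuple.monotone_sort a).strictMono_of_injective (ha.comp (Equiv.injective _))
  have l := sorted_law ν hs (h0 _) φ hφm hφ
  rw [perm_haar ν a (Tuple.sort a) (fun X => φ ((X.submatrix Fin.castSucc Fin.castSucc).submatrix Fin.castSucc Fin.castSucc))] at l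
  rw [l, sym_law]
  · rw [← lintegral_const_mul' _ _ (ENNReal.natCast_ne_top _)]
    refine lintegral_congr fun x => ?_
    have e : ((2 * m).factorial : ℝ) * ((vdm fun i => x i ^ 2) / (vdm fun i => (a ∘ Tuple.sort a) i ^ 2)) * (MM x (a ∘ Tuple.sort a)).det
        = (m.factorial : ℝ) * dens (((2 * m).factorial : ℝ) / (m.factorial : ℝ)) x a := by
      have h1 := dens_perm_a ((2 * m).factorial : ℝ) (Tuple.sort a) x a
      change dens ((2 * m).factorial : ℝ) x (a ∘ Tuple.sort a) = _
      rw [h1]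
      have : (m.factorial : ℝ) ≠ 0 := by exact_mod_cast m.factorial_ne_zero
      unfold dens
      field_simp
    rw [e, ENNReal.ofReal_mul (by positivity), ENNReal.ofReal_natCast]
    ring
  · exact (hφm.comp (Dgen_ext_meas _ _)).mul (dens_meas _ a).ennreal_ofReal
  · intro σ x
    rw [dens_perm_x]
    obtain ⟨g, hg, h⟩ := Dgen_perm_conj σ x
    rw [h, hφ _ (Dgen_transpose _ _) g hg]

lemma bochner_law {m : ℕ} (ν : Measure (OG (2 * m + 1 + 1))) [ν.IsHaarMeasure] [IsProbabilityMeasure ν]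
    {a : Fin (m + 1) → ℝ} (ha : Function.Injective a) (h0 : ∀ i, 0 < a i)
    (φ : Matrix (Fin (2 * m)) (Fin (2 * m)) ℝ → ℝ) (hφ : IsInvTest (2 * m) φ) :
    (∫ k, φ (((k.1 * Dgen (2 * m + 1 + 1) (extN a) * k.1ᵀ).submatrix Fin.castSucc Fin.castSucc).submatrix Fin.castSucc Fin.castSucc) ∂ν) =
      ∫ x in orth m, φ (Dgen (2 * m) (extN x)) * dens (((2 * m).factorial : ℝ) / (m.factorial : ℝ)) x a := by
  obtain ⟨hm, ⟨C, hC⟩, hi⟩ := hφ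
  have hpos : ∀ x ∈ orth m, 0 ≤ dens (((2 * m).factorial : ℝ) / (m.factorial : ℝ)) x a := fun x hx =>
    dens_nonneg (by positivity) hx h0
  have hd : Measurable fun x => dens (((2 * m).factorial : ℝ) / (m.factorial : ℝ)) x a := dens_meas _ a
  have hin : IntegrableOn (fun x => dens (((2 * m).factorial : ℝ) / (m.factorial : ℝ)) x a) (orth m) := by
    refine ⟨hd.aestronglyMeasurable, ?_⟩
    rw [hasFiniteIntegral_iff_ofReal ((ae_restrict_iff' (orth_meas m)).mpr (Filter.Eventually.of_forall hpos))]
    have := gen_law ν ha h0 (fun _ => 1) measurable_const (fun _ _ _ _ => rfl)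
    simp only [one_mul, lintegral_const, measure_univ] at this
    rw [← this]; simp
  have hint : IntegrableOn (fun x => φ (Dgen (2 * m) (extN x)) * dens (((2 * m).factorial : ℝ) / (m.factorial : ℝ)) x a) (orth m) := by
    refine Integrable.bdd_mul (c := C) hin (hm.comp (Dgen_ext_meas _ _)).aestronglyMeasurable (Filter.Eventually.of_forall fun x => hC _)
  have hcm : Measurable fun k : OG (2 * m + 1 + 1) => ((k.1 * Dgen (2 * m + 1 + 1) (extN a) * k.1ᵀ).submatrix Fin.castSucc Fin.castSucc).submatrix (Fin.castSucc : Fin (2 * m) → _) Fin.castSucc := by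
    have h := conj_meas (2 * m + 1) (Dgen (2 * m + 1 + 1) (extN a))
    refine measurable_pi_lambda _ fun i => measurable_pi_lambda _ fun j => ?_
    exact (measurable_pi_apply j.castSucc).comp ((measurable_pi_apply i.castSucc).comp h)
  have hintk : Integrable (fun k : OG (2 * m + 1 + 1) => φ (((k.1 * Dgen (2 * m + 1 + 1) (extN a) * k.1ᵀ).submatrix Fin.castSucc Fin.castSucc).submatrix Fin.castSucc Fin.castSucc)) ν :=
    Integrable.of_bound (Measurable.comp (g := φ) hm hcm).aestronglyMeasurable C (Filter.Eventually.of_forall fun x => hC _)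
  rw [integral_eq_lintegral_pos_part_sub_lintegral_neg_part hintk, integral_eq_lintegral_pos_part_sub_lintegral_neg_part hint]
  have l1 := gen_law ν ha h0 (fun X => ENNReal.ofReal (φ X)) hm.ennreal_ofReal (fun X hX k hk => by
    simp only [hi X hX k hk])
  have l2 := gen_law ν ha h0 (fun X => ENNReal.ofReal (- φ X)) hm.neg.ennreal_ofReal (fun X hX k hk => by
    simp only [hi X hX k hk])
  rw [l1, l2]
  congr 2
  · refine setLIntegral_congr_fun (orth_meas m) fun x hx => ?_
    exact (ENNReal.ofReal_mul' (hpos x hx)).symm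
  · refine setLIntegral_congr_fun (orth_meas m) fun x hx => ?_
    rw [← neg_mul]
    exact (ENNReal.ofReal_mul' (hpos x hx)).symm

lemma Dmat_eq {n : ℕ} (a : Fin n → ℝ) : Dmat a = Dgen (2 * n) (extN a) := by
  ext i j
  simp only [Dmat, Dgen, Matrix.of_apply]
  rw [← extN_lt a ⟨i.val / 2, by have := i.isLt; omega⟩]

lemma Mxa_eq {m : ℕ} (x : Fin m → ℝ) (a : Fin (m + 1) → ℝ) (hn : 2 ≤ m + 1) :
    Mxa (n := m + 1) x a hn = MM x a := by
  ext b c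
  simp only [Mxa, MM, Matrix.of_apply]
  refine Fin.cases ?_ (fun j => ?_) b
  · simp
  · simp only [Fin.cons_succ, Fin.val_succ]
    rw [dif_neg (Nat.succ_ne_zero _)]
    change (if x j ≤ a c then a c - x j else 0) = _
    split_ifs with h
    · rw [max_eq_right (sub_nonneg.mpr h)]
    · rw [max_eq_left]; linarith [not_le.mp h]

/-- Proposition A.2: eigenvalue PDF for the corank-2 projection of
`k D(a) kᵀ`, `k` Haar distributed on `O(2n)`. -/
theorem corank_two_projection (n : ℕ) (hn : 2 ≤ n)
    (μ : Measure (OG (2 * n))) (hμ : μ.IsHaarMeasure) (hμ1 : IsProbabilityMeasure μ)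
    (a : Fin n → ℝ) (ha : ∀ j, 0 < a j) (ha' : Function.Injective a) :
    ∀ φ : Matrix (Fin (2 * (n - 1))) (Fin (2 * (n - 1))) ℝ → ℝ, IsInvTest (2 * (n - 1)) φ →
      (∫ k : OG (2 * n),
          φ ((((k : Matrix (Fin (2 * n)) (Fin (2 * n)) ℝ) * Dmat a *
              (k : Matrix (Fin (2 * n)) (Fin (2 * n)) ℝ)ᵀ).submatrix
                (Fin.castLE (by omega : 2 * (n - 1) ≤ 2 * n))
                (Fin.castLE (by omega : 2 * (n - 1) ≤ 2 * n)))) ∂μ) =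
        ∫ x in {x : Fin (n - 1) → ℝ | ∀ j, 0 < x j},
          φ (Dmat x) *
            (((Nat.factorial (2 * n - 2) : ℝ) / (Nat.factorial (n - 1) : ℝ)) *
              ((vdm fun j => (x j) ^ 2) / (vdm fun j => (a j) ^ 2)) *
                (Mxa x a hn).det) := by
  obtain ⟨m, rfl⟩ : ∃ m, n = m + 1 := ⟨n - 1, by omega⟩
  intro φ hφ
  have h := bochner_law (m := m) μ ha' ha φ hφ
  have e : ∀ x : Fin m → ℝ, φ (Dgen (2 * m) (extN x)) * dens (((2 * m).factorial : ℝ) / (m.factorial : ℝ)) x a =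
      φ (Dmat x) * (((Nat.factorial (2 * (m + 1) - 2) : ℝ) / (Nat.factorial (m + 1 - 1) : ℝ)) *
              ((vdm fun j => (x j) ^ 2) / (vdm fun j => (a j) ^ 2)) *
                (Mxa (n := m + 1) x a hn).det) := by
    intro x
    rw [Mxa_eq, Dmat_eq]
    rfl
  simp_rw [e] at h
  rw [Dmat_eq]
  exact h

end
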